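/- arXiv:2101.09386 — 2 statements merged into one kernel-verified Lean document; each statement's English description precedes it below -/
import Mathlib

section
/- Let K be a field, n ≥ 1, and let R be a finitely generated subring of K. Let Δ be a commutative subgroup of GL_n(K) all of whose elements are semi-simple and such that every element of Δ and its inverse have all matrix entries in R (i.e., Δ is contained in the image of GL_n(R) in GL_n(K)). Then Δ is finitely generated. -/
open Matrix

/-- An element of `GL n K` is semi-simple if the corresponding linear endomorphism
of `K^n` is a semisimple endomorphism. -/
def IsSemisimpleElt {n : ℕ} {K : Type*} [Field K] (g : GL (Fin n) K) : Prop :=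
  Module.End.IsSemisimple ((g : Matrix (Fin n) (Fin n) K).mulVecLin)

/-!
Lifting the entries, `Δ` lies in the units of a commutative ring `T` of matrices which is finite
over `R`, hence finitely generated over `ℤ`. A semi-simple unipotent element is trivial, so `Δ`
embeds in the units of the reduced quotient of `T`, and therefore in a finite product of unit groups
of finitely generated domains.

That these unit groups are finitely generated is a theorem of Roquette, proved here by induction on
the transcendence degree of the fraction field `F` over its prime field. If `F` is finite separable
over `k(x)`, a unit of a finitely generated subring `A` has trivial valuation at all but finitely
many primes of the integral closures of `k[x]` and of `k[1/x]`; so, up to a finitely generated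
quotient, the units of `A` are integral over both lines and hence algebraic over `k`. Such constants
stay distinct in a residue field of `k[A]`, which is finite over `k` and thus has smaller
transcendence degree. The induction ends with finite fields and with Dirichlet's unit theorem.
-/

open IsDedekindDomain IntermediateField
open scoped IntermediateField.algebraAdjoinAdjoin

section FinitelyGeneratedGroup

theorem groupFG_of_normal_of_quotient {G : Type*} [Group G] (N : Subgroup G) [N.Normal]
    [hN : Group.FG N] [hQ : Group.FG (G ⧸ N)] : Group.FG G := by
  obtain ⟨S, hS⟩ := Group.fg_def.mp hQ
  let P : Subgroup G := Subgroup.closure (Quotient.out '' (S : Set (G ⧸ N)))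
  have hP : P.FG := (Subgroup.fg_iff P).mpr ⟨_, rfl, S.finite_toSet.image _⟩
  have hmap : P.map (QuotientGroup.mk' N) = ⊤ := by
    rw [MonoidHom.map_closure, Set.image_image]
    simpa only [QuotientGroup.mk'_apply, QuotientGroup.out_eq', Set.image_id'] using hS
  have htop : P ⊔ N = ⊤ := by
    rw [← Subgroup.comap_top (QuotientGroup.mk' N), ← hmap, Subgroup.comap_map_eq,
      QuotientGroup.ker_mk']
  rw [Group.fg_def, ← htop]
  exact hP.sup ((Group.fg_iff_subgroup_fg N).mp hN)

variable {G H : Type*} [CommGroup G] [CommGroup H]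

theorem groupFG_of_injective [Group.FG H] (f : G →* H) (hf : Function.Injective f) :
    Group.FG G := by
  have : Module.Finite ℤ (Additive H) := Module.Finite.iff_addGroup_fg.mpr inferInstance
  exact GroupFG.iff_add_fg.mpr <| Module.Finite.iff_addGroup_fg.mp <|
    Module.Finite.of_injective f.toAdditive.toIntLinearMap hf

theorem groupFG_quotient_of_ker_le [Group.FG H] (f : G →* H) {N : Subgroup G}
    (hN : f.ker ≤ N) : Group.FG (G ⧸ N) := by
  have : Group.FG (G ⧸ f.ker) := groupFG_of_injective _ (QuotientGroup.kerLift_injective f)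
  exact Group.fg_of_surjective <|
    QuotientGroup.map_surjective_of_surjective f.ker N (.id G) (QuotientGroup.mk'_surjective N) hN

end FinitelyGeneratedGroup

section FinitelyGeneratedSubring

variable {F : Type*} [CommRing F]

theorem finiteType_int_iff_exists_closure_eq {A : Subring F} :
    Algebra.FiniteType ℤ A ↔ ∃ s : Finset F, Subring.closure (s : Set F) = A := by
  have : Algebra.FiniteType ℤ A ↔ (subalgebraOfSubring A).FG :=
    (subalgebraOfSubring A).fg_iff_finiteType.symm
  rw [this]
  refine exists_congr fun s => ?_
  rw [Algebra.adjoin_int, SetLike.ext_iff, SetLike.ext_iff]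
  rfl

end FinitelyGeneratedSubring

section IntegralOverLine

variable {R F : Type*} [CommRing R] [Field F] [Algebra R F]

theorem mem_valuationSubring_of_isIntegral_adjoin {V : ValuationSubring F}
    (hV : (algebraMap R F).range ≤ V.toSubring) {s : Set F} (hs : s ⊆ V) {u : F}
    (hu : IsIntegral (Algebra.adjoin R s) u) : u ∈ V := by
  have hle : (Algebra.adjoin R s).toSubring ≤ V.toSubring := by
    rw [Algebra.adjoin_eq_ring_closure, Subring.closure_le]
    exact Set.union_subset hV hs
  have huV : IsIntegral V u :=
    hu.map_of_comp_eq (Subring.inclusion hle) (RingHom.id F) rfl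
  obtain ⟨w, rfl⟩ := IsIntegrallyClosed.isIntegral_iff.mp huV
  exact w.2

theorem isIntegral_of_isIntegral_adjoin_of_isIntegral_adjoin_inv {x u : F}
    (hx : IsIntegral (Algebra.adjoin R {x}) u) (hx' : IsIntegral (Algebra.adjoin R {x⁻¹}) u) :
    IsIntegral R u := by
  by_contra hu
  have : IsIntegrallyClosedIn (integralClosure R F).toSubring F :=
    inferInstanceAs (IsIntegrallyClosedIn (integralClosure R F) F)
  obtain ⟨V, hle, huV⟩ := Subring.exists_le_valuationSubring_of_isIntegrallyClosedIn
    (R := (integralClosure R F).toSubring) hu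
  have hV : (algebraMap R F).range ≤ V.toSubring := by
    rintro _ ⟨r, rfl⟩
    exact hle isIntegral_algebraMap
  refine huV ((V.mem_or_inv_mem x).elim (fun h => ?_) fun h => ?_)
  · exact mem_valuationSubring_of_isIntegral_adjoin hV (Set.singleton_subset_iff.mpr h) hx
  · exact mem_valuationSubring_of_isIntegral_adjoin hV (Set.singleton_subset_iff.mpr h) hx'

end IntegralOverLine

/-- The group of units of the subring `A` which are also units of the subring `B`. -/
def commonUnits {F : Type*} [CommRing F] (A B : Subring F) : Subgroup Aˣ :=
  B.toSubmonoid.units.comap (Units.map A.subtype.toMonoidHom)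

/-- The property of a field that each of its finitely generated subrings has a finitely generated
group of units. It is the property carried through the induction on the transcendence degree. -/
def HasFGUnits (F : Type*) [Field F] : Prop :=
  ∀ A : Subring F, Algebra.FiniteType ℤ A → Group.FG Aˣ

section DedekindDomain

variable (D : Type*) {F : Type*} [CommRing D] [IsDedekindDomain D] [Field F] [Algebra D F]
  [IsFractionRing D F]

theorem finite_setOf_not_le_valuation_integer (A : Subring F) [hA : Algebra.FiniteType ℤ A] :
    {v : HeightOneSpectrum D | ¬ A ≤ (v.valuation F).integer}.Finite := by
  obtain ⟨s, rfl⟩ := finiteType_int_iff_exists_closure_eq.mp hA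
  refine (s.finite_toSet.biUnion fun a _ => HeightOneSpectrum.Support.finite D a).subset
    fun v hv => ?_
  obtain ⟨a, ha, hav⟩ := Set.not_subset.mp (mt Subring.closure_le.mpr hv)
  exact Set.mem_biUnion ha (show 1 < v.valuation F a from not_le.mp hav)

theorem groupFG_quotient_commonUnits_range (A : Subring F) [Algebra.FiniteType ℤ A] :
    Group.FG (Aˣ ⧸ commonUnits A (algebraMap D F).range) := by
  have := (finite_setOf_not_le_valuation_integer D A).to_subtype
  let φ : Aˣ →* ({v : HeightOneSpectrum D | ¬ A ≤ (v.valuation F).integer} → Multiplicative ℤ) :=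
    MonoidHom.pi fun v => v.1.valuationOfNeZero.comp (Units.map A.subtype.toMonoidHom)
  have hmem : ∀ u : Aˣ, φ u = 1 → (u : F) ∈ (algebraMap D F).range := by
    refine fun u hu => HeightOneSpectrum.mem_integers_of_valuation_le_one F _ fun v => ?_
    by_cases hv : A ≤ (v.valuation F).integer
    · exact hv u.1.2
    · have h1 : v.valuationOfNeZero (Units.map A.subtype.toMonoidHom u) = 1 := congrFun hu ⟨v, hv⟩
      have h2 := v.valuationOfNeZero_eq (Units.map A.subtype.toMonoidHom u)
      rw [h1] at h2
      exact h2.ge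
  refine groupFG_quotient_of_ker_le φ fun u hu => ⟨hmem u hu, hmem u⁻¹ ?_⟩
  rw [map_inv, MonoidHom.mem_ker.mp hu, inv_one]

theorem hasFGUnits_of_isFractionRing [Group.FG Dˣ] : HasFGUnits F := by
  intro A hA
  have := groupFG_quotient_commonUnits_range D A
  let ι : Dˣ →* Fˣ := Units.map (algebraMap D F).toMonoidHom
  have hι : ∀ u : commonUnits A (algebraMap D F).range,
      Units.map A.subtype.toMonoidHom u ∈ ι.range := by
    rintro ⟨u, ⟨a, ha⟩, ⟨b, hb⟩⟩
    have hab : a * b = 1 := FaithfulSMul.algebraMap_injective D F <| by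
      rw [map_mul, ha, hb, map_one]; exact Units.mul_inv _
    exact ⟨⟨a, b, hab, mul_comm a b ▸ hab⟩, Units.ext ha⟩
  have : Group.FG (commonUnits A (algebraMap D F).range) := groupFG_of_injective
    (((Units.map A.subtype.toMonoidHom).comp (Subgroup.subtype _)).codRestrict ι.range hι)
    fun u v h => Subtype.ext <| Units.map_injective Subtype.val_injective (congrArg Subtype.val h)
  exact groupFG_of_normal_of_quotient (commonUnits A (algebraMap D F).range)

end DedekindDomain

theorem hasFGUnits_of_numberField (F : Type*) [Field F] [NumberField F] : HasFGUnits F := by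
  have : Group.FG (NumberField.RingOfIntegers F)ˣ := Group.fg_iff_monoid_fg.mpr inferInstance
  exact hasFGUnits_of_isFractionRing (NumberField.RingOfIntegers F)

section FunctionField

variable {k F : Type*} [Field k] [Field F] [Algebra k F]

theorem isPrincipalIdealRing_adjoin_singleton (x : F) :
    IsPrincipalIdealRing (Algebra.adjoin k {x}) := by
  rw [Algebra.adjoin_singleton_eq_range_aeval]
  exact IsPrincipalIdealRing.of_surjective (Polynomial.aeval (R := k) x).rangeRestrict
    (Polynomial.aeval x).rangeRestrict_surjective

theorem groupFG_quotient_commonUnits_integralClosure (x : F) [FiniteDimensional k⟮x⟯ F]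
    [Algebra.IsSeparable k⟮x⟯ F] (A : Subring F) [Algebra.FiniteType ℤ A] :
    Group.FG (Aˣ ⧸ commonUnits A (integralClosure (Algebra.adjoin k {x}) F).toSubring) := by
  have := isPrincipalIdealRing_adjoin_singleton (k := k) x
  have := integralClosure.isDedekindDomain (Algebra.adjoin k {x}) k⟮x⟯ F
  have := integralClosure.isFractionRing_of_finite_extension (A := Algebra.adjoin k {x}) k⟮x⟯ F
  rw [← Subalgebra.range_algebraMap]
  exact groupFG_quotient_commonUnits_range (integralClosure (Algebra.adjoin k {x}) F) A

theorem adjoin_simple_inv (x : F) : k⟮x⁻¹⟯ = k⟮x⟯ := by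
  apply le_antisymm <;> rw [adjoin_simple_le_iff]
  · exact inv_mem (mem_adjoin_simple_self k x)
  · simpa only [inv_inv] using inv_mem (mem_adjoin_simple_self k x⁻¹)

theorem groupFG_quotient_commonUnits_constants (x : F) [FiniteDimensional k⟮x⟯ F]
    [Algebra.IsSeparable k⟮x⟯ F] (A : Subring F) [Algebra.FiniteType ℤ A] :
    Group.FG (Aˣ ⧸ commonUnits A (integralClosure k F).toSubring) := by
  let B (y : F) := (integralClosure (Algebra.adjoin k {y}) F).toSubring
  have : Group.FG (Aˣ ⧸ commonUnits A (B x)) := groupFG_quotient_commonUnits_integralClosure x A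
  have : Group.FG (Aˣ ⧸ commonUnits A (B x⁻¹)) := by
    have : FiniteDimensional k⟮x⁻¹⟯ F := by rwa [adjoin_simple_inv]
    have : Algebra.IsSeparable k⟮x⁻¹⟯ F := by rwa [adjoin_simple_inv]
    exact groupFG_quotient_commonUnits_integralClosure x⁻¹ A
  refine groupFG_quotient_of_ker_le (H := (Aˣ ⧸ commonUnits A (B x)) × (Aˣ ⧸ commonUnits A (B x⁻¹)))
    ((QuotientGroup.mk' _).prod (QuotientGroup.mk' _)) ?_
  rw [MonoidHom.ker_prod, QuotientGroup.ker_mk', QuotientGroup.ker_mk']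
  exact fun u ⟨hx, hx'⟩ =>
    ⟨isIntegral_of_isIntegral_adjoin_of_isIntegral_adjoin_inv hx.1 hx'.1,
      isIntegral_of_isIntegral_adjoin_of_isIntegral_adjoin_inv hx.2 hx'.2⟩

theorem eq_zero_of_isIntegral_of_mem_ideal {C : Type*} [CommRing C] [IsDomain C] [Algebra k C]
    {I : Ideal C} (hI : I ≠ ⊤) {c : C} (hc : IsIntegral k c) (hcI : c ∈ I) : c = 0 := by
  by_contra h
  exact hI (I.eq_top_of_isUnit_mem hcI (hc.isUnit h))

end FunctionField

section Induction

universe u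

variable {k : Type*} {F : Type u} [Field k] [Field F] [Algebra k F]

theorem groupFG_commonUnits_constants
    (hk : ∀ (L : Type u) [Field L] [Algebra k L] [FiniteDimensional k L], HasFGUnits L)
    (A : Subring F) [hA : Algebra.FiniteType ℤ A] :
    Group.FG (commonUnits A (integralClosure k F).toSubring) := by
  obtain ⟨s, hs⟩ := finiteType_int_iff_exists_closure_eq.mp hA
  let C : Subalgebra k F := Algebra.adjoin k s
  have hAC : A ≤ C.toSubring := hs ▸ Subring.closure_le.mpr Algebra.subset_adjoin
  have : Algebra.FiniteType k C := C.fg_iff_finiteType.mp ⟨s, rfl⟩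
  obtain ⟨M, hM⟩ := Ideal.exists_maximal C
  let _ : Field (C ⧸ M) := Ideal.Quotient.field M
  have : FiniteDimensional k (C ⧸ M) := finite_of_finite_type_of_isJacobsonRing k (C ⧸ M)
  let i : A →+* C := Subring.inclusion hAC
  let r : A →+* C ⧸ M := (Ideal.Quotient.mk M).comp i
  have : Group.FG r.rangeˣ := hk (C ⧸ M) r.range <|
    .of_surjective r.rangeRestrict.toIntAlgHom r.rangeRestrict_surjective
  refine groupFG_of_injective
    ((Units.map r.rangeRestrict.toMonoidHom).comp (Subgroup.subtype _)) ?_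
  rw [injective_iff_map_eq_one]
  intro ⟨u, hu, _⟩ hru
  have hint : IsIntegral k (i u - 1) :=
    (isIntegral_algHom_iff C.val Subtype.val_injective).mp <|
      IsIntegral.sub (show IsIntegral k (u : F) from hu) isIntegral_one
  have hmem : i u - 1 ∈ M := by
    rw [← Ideal.Quotient.eq_zero_iff_mem, map_sub, map_one, sub_eq_zero]
    exact congrArg (fun v => (v.1 : C ⧸ M)) hru
  have hone : i u = i 1 := sub_eq_zero.mp (eq_zero_of_isIntegral_of_mem_ideal hM.ne_top hint hmem)
  exact Subtype.ext <| Units.ext <| Set.inclusion_injective hAC hone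

theorem hasFGUnits_of_finiteDimensional_adjoin_simple
    (hk : ∀ (L : Type u) [Field L] [Algebra k L] [FiniteDimensional k L], HasFGUnits L)
    (x : F) [FiniteDimensional k⟮x⟯ F] [Algebra.IsSeparable k⟮x⟯ F] : HasFGUnits F := by
  intro A hA
  have := groupFG_quotient_commonUnits_constants (k := k) x A
  have := groupFG_commonUnits_constants hk A
  exact groupFG_of_normal_of_quotient (commonUnits A (integralClosure k F).toSubring)

theorem trdeg_lt_trdeg_of_isAlgebraic_of_transcendental {κ : Type*} {k L F : Type u}
    [Field κ] [Field k] [Field L] [Field F] [Algebra κ k] [Algebra κ L] [Algebra κ F]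
    [Algebra k L] [Algebra k F] [IsScalarTower κ k L] [IsScalarTower κ k F] [FinTrdeg κ k]
    [Algebra.IsAlgebraic k L] [Algebra.Transcendental k F] :
    Algebra.trdeg κ L < Algebra.trdeg κ F := by
  rw [← trdeg_add_eq κ k (A := L), trdeg_eq_zero (R := k) (A := L),
    ← trdeg_add_eq κ k (A := F)]
  simpa only [add_zero] using
    (Cardinal.add_lt_add_iff_of_left_lt_aleph0 (trdeg_lt_aleph0 κ k)).mpr (trdeg_pos k F)

theorem exists_transcendental_isSeparable_adjoin_simple (κ F : Type*) [Field κ] [PerfectField κ]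
    [Field F] [Algebra κ F] [Algebra.EssFiniteType κ F] [hF : Algebra.Transcendental κ F] :
    ∃ (k : IntermediateField κ F) (x : F), Algebra.EssFiniteType κ k ∧ Transcendental k x ∧
      Algebra.IsSeparable k⟮x⟯ F := by
  classical
  obtain ⟨t, ht, hsep⟩ := exists_isTranscendenceBasis_and_isSeparable_of_perfectField κ F
  obtain ⟨x, hxt⟩ := ht.nonempty_iff_transcendental.mpr hF
  let k : IntermediateField κ F := adjoin κ (t.erase x : Finset F)
  have hinsert : insert x ((t.erase x : Finset F) : Set F) = t := by
    rw [← Finset.coe_insert, Finset.insert_erase hxt]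
  refine ⟨k, x, IntermediateField.essFiniteType_iff.mpr ⟨t.erase x, rfl⟩, ?_, ?_⟩
  · have h1 : AlgebraicIndepOn κ id (insert x ((t.erase x : Finset F) : Set F)) := by
      rw [hinsert]; exact ht.1
    have h2 := ((AlgebraicIndepOn.insert_iff (by simp)).mp h1).2
    rw [Set.image_id] at h2
    exact mt (IsFractionRing.isAlgebraic_iff
      (Algebra.adjoin κ ((t.erase x : Finset F) : Set F)) k F).mpr h2
  · have h : k⟮x⟯.restrictScalars κ = adjoin κ (t : Set F) := by
      rw [adjoin_adjoin_left, Set.union_singleton, hinsert]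
    rw [← h] at hsep
    exact hsep

theorem hasFGUnits_of_essFiniteType (κ : Type*) [Field κ] [PerfectField κ]
    (hκ : ∀ (L : Type u) [Field L] [Algebra κ L] [FiniteDimensional κ L], HasFGUnits L)
    (F : Type u) [Field F] [Algebra κ F] [Algebra.EssFiniteType κ F] : HasFGUnits F := by
  induction hd : Algebra.trdeg κ F using WellFoundedLT.induction generalizing F with
  | ind d ih
  subst hd
  obtain halg | htr := em (Algebra.IsAlgebraic κ F)
  · have := Algebra.finite_of_essFiniteType_of_isAlgebraic (F := κ) (E := F)
    exact hκ F
  · obtain ⟨k, x, hk, hx, hsep⟩ := exists_transcendental_isSeparable_adjoin_simple κ F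
      (hF := Algebra.transcendental_iff_not_isAlgebraic.mpr htr)
    have : Algebra.EssFiniteType k F := .of_comp κ k F
    have : Algebra.EssFiniteType k⟮x⟯ F := .of_comp k k⟮x⟯ F
    have : FiniteDimensional k⟮x⟯ F := Algebra.finite_of_essFiniteType_of_isAlgebraic
    refine hasFGUnits_of_finiteDimensional_adjoin_simple (k := k) (fun L _ _ _ => ?_) x
    let _ : Algebra κ L := Algebra.compHom L (algebraMap κ k)
    have : IsScalarTower κ k L := .of_algebraMap_eq fun _ => rfl
    have : Algebra.EssFiniteType κ L := .comp κ k L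
    have : Algebra.Transcendental k F := ⟨x, hx⟩
    exact ih _ (trdeg_lt_trdeg_of_isAlgebraic_of_transcendental (k := k)) L rfl

theorem hasFGUnits_of_essFiniteType_int (F : Type*) [Field F] [Algebra.EssFiniteType ℤ F] :
    HasFGUnits F := by
  obtain _ | ⟨p, _, _⟩ := CharP.exists' F
  · let _ : Algebra ℚ F := DivisionRing.toRatAlgebra
    have : Algebra.EssFiniteType ℚ F := .of_comp ℤ ℚ F
    refine hasFGUnits_of_essFiniteType ℚ (fun L _ _ _ => ?_) F
    have : CharZero L := algebraRat.charZero L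
    have : NumberField L :=
      { to_finiteDimensional := by convert ‹FiniteDimensional ℚ L›; subsingleton }
    exact hasFGUnits_of_numberField L
  · let _ : Algebra (ZMod p) F := ZMod.algebra F p
    have : Algebra.EssFiniteType (ZMod p) F := .of_comp ℤ (ZMod p) F
    refine hasFGUnits_of_essFiniteType (ZMod p) (fun L _ _ _ A _ => ?_) F
    have : Finite L := Module.finite_of_finite (ZMod p)
    infer_instance

end Induction

section Units

variable {A : Type*} [CommRing A] [Algebra.FiniteType ℤ A]

theorem HasFGUnits.groupFG_units_of_injective {F : Type*} [Field F] (hF : HasFGUnits F)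
    {f : A →+* F} (hf : Function.Injective f) : Group.FG Aˣ := by
  have : Group.FG f.rangeˣ := hF f.range <|
    .of_surjective f.rangeRestrict.toIntAlgHom f.rangeRestrict_surjective
  exact groupFG_of_injective (Units.map f.rangeRestrict.toMonoidHom) <|
    Units.map_injective fun a b h => hf (congrArg Subtype.val h)

theorem groupFG_units_of_isFractionRing (F : Type*) [Field F] [Algebra A F] [IsFractionRing A F] :
    Group.FG Aˣ := by
  have : Algebra.EssFiniteType A F := .of_isLocalization F (nonZeroDivisors A)
  have : Algebra.EssFiniteType ℤ F := .comp ℤ A F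
  exact (hasFGUnits_of_essFiniteType_int F).groupFG_units_of_injective
    (IsFractionRing.injective A F)

theorem groupFG_units_quotient (I : Ideal A) [I.IsPrime] : Group.FG (A ⧸ I)ˣ := by
  have : @Algebra.FiniteType ℤ (A ⧸ I) _ _ (Ring.toIntAlgebra _) :=
    .of_surjective (Ideal.Quotient.mk I).toIntAlgHom Ideal.Quotient.mk_surjective
  exact groupFG_units_of_isFractionRing (FractionRing (A ⧸ I))

theorem groupFG_of_isNilpotent_sub_one_imp {G : Type*} [CommGroup G] (f : G →* A)
    (hf : ∀ g, IsNilpotent (f g - 1) → g = 1) : Group.FG G := by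
  have : IsNoetherianRing A := Algebra.FiniteType.isNoetherianRing ℤ A
  have : Finite (minimalPrimes A) := minimalPrimes.finite_of_isNoetherianRing A
  have (p : minimalPrimes A) : p.1.IsPrime := p.2.1.1
  have (p : minimalPrimes A) : Group.FG (A ⧸ p.1)ˣ := groupFG_units_quotient p.1
  let φ : G →* (∀ p : minimalPrimes A, (A ⧸ p.1)ˣ) :=
    MonoidHom.pi fun p => (Units.map (Ideal.Quotient.mk p.1).toMonoidHom).comp f.toHomUnits
  refine groupFG_of_injective φ ?_
  rw [injective_iff_map_eq_one]
  intro g hg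
  apply hf
  rw [← mem_nilradical, nilradical, ← Ideal.sInf_minimalPrimes, Submodule.mem_sInf]
  intro p hp
  rw [← Ideal.Quotient.eq_zero_iff_mem, map_sub, map_one, sub_eq_zero]
  exact congrArg Units.val (congrFun hg ⟨p, hp⟩)

end Units

theorem groupFG_of_isNilpotent_sub_one_imp_of_moduleFinite {R A G : Type*} [CommRing R]
    [Algebra.FiniteType ℤ R] [Ring A] [Algebra R A] [Module.Finite R A] [CommGroup G] (f : G →* A)
    (hf : ∀ g, IsNilpotent (f g - 1) → g = 1) : Group.FG G := by
  have : IsNoetherianRing R := Algebra.FiniteType.isNoetherianRing ℤ R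
  let T := Algebra.adjoin R (Set.range f)
  have : IsMulCommutative T := Algebra.isMulCommutative_adjoin R <| by
    rintro _ ⟨g, rfl⟩ _ ⟨h, rfl⟩
    rw [← map_mul, mul_comm, map_mul]
  let _ : CommRing T := { (inferInstance : Ring T) with mul_comm := mul_comm' }
  have : Module.Finite R T := inferInstanceAs (Module.Finite R T.toSubmodule)
  have : IsScalarTower ℤ R T := .of_algebraMap_eq' (RingHom.ext_int _ _)
  have : @Algebra.FiniteType ℤ T _ _ (Ring.toIntAlgebra T) :=
    .trans ‹Algebra.FiniteType ℤ R› inferInstance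
  let fT : G →* T := f.codRestrict T.toSubmonoid fun g => Algebra.subset_adjoin ⟨g, rfl⟩
  refine groupFG_of_isNilpotent_sub_one_imp fT fun g hg => hf g ?_
  exact hg.map T.val

theorem eq_one_of_isSemisimpleElt_of_isNilpotent_sub_one {K : Type*} [Field K] {n : ℕ}
    {g : GL (Fin n) K} (hg : IsSemisimpleElt g)
    (hnil : IsNilpotent ((g : Matrix (Fin n) (Fin n) K) - 1)) : g = 1 := by
  let φ : Module.End K (Fin n → K) := Matrix.toLinAlgEquiv' (g : Matrix (Fin n) (Fin n) K)
  have hss : (φ - algebraMap K _ 1).IsSemisimple :=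
    Module.End.isSemisimple_sub_algebraMap_iff.mpr hg
  have hφ : IsNilpotent (φ - algebraMap K _ 1) := by
    simpa only [map_sub, map_one] using hnil.map Matrix.toLinAlgEquiv'
  have h0 := Module.End.eq_zero_of_isNilpotent_isSemisimple hφ hss
  rw [map_one, sub_eq_zero, map_eq_one_iff _ (AlgEquiv.injective _)] at h0
  exact Units.ext h0

theorem stmt_13_general {K ι : Type*} [CommRing K] [Fintype ι] [DecidableEq ι] (R : Subring K)
    (hR : ∃ s : Finset K, Subring.closure (↑s : Set K) = R) (Δ : Subgroup (GL ι K))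
    (hcomm : ∀ x ∈ Δ, ∀ y ∈ Δ, x * y = y * x)
    (huni : ∀ g ∈ Δ, IsNilpotent ((g : Matrix ι ι K) - 1) → g = 1)
    (hent : ∀ g ∈ Δ, ∀ i j, (g : Matrix ι ι K) i j ∈ R) : Group.FG Δ := by
  have : Algebra.FiniteType ℤ R := finiteType_int_iff_exists_closure_eq.mpr hR
  let _ : CommGroup Δ := { (inferInstance : Group Δ) with
    mul_comm := fun a b => Subtype.ext (hcomm a a.2 b b.2) }
  let ψ : Matrix ι ι R →+* Matrix ι ι K := R.subtype.mapMatrix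
  have hψ : Function.Injective ψ := Matrix.map_injective Subtype.val_injective
  let f : Δ →* Matrix ι ι R :=
    { toFun := fun g => .of fun i j => ⟨(g : GL ι K) i j, hent g g.2 i j⟩
      map_one' := hψ <| by rw [map_one]; rfl
      map_mul' := fun g h => hψ <| by rw [map_mul]; rfl }
  have hψf (g : Δ) : ψ (f g) = (g : GL ι K) := rfl
  exact groupFG_of_isNilpotent_sub_one_imp_of_moduleFinite (R := R) f fun g hg =>
    Subtype.ext <| huni g g.2 <| by simpa only [map_sub, map_one, hψf] using hg.map ψ

/-- Let `R` be a finitely generated subring of a field `K`. Every commutative subgroup of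
`GL_n(K)` consisting of semi-simple elements whose elements (together with their inverses)
have all entries in `R` is finitely generated. -/
theorem stmt_13 {K : Type*} [Field K] {n : ℕ} (hn : 1 ≤ n)
    (R : Subring K) (hR : ∃ s : Finset K, Subring.closure (↑s : Set K) = R)
    (Δ : Subgroup (GL (Fin n) K))
    (hcomm : ∀ x ∈ Δ, ∀ y ∈ Δ, x * y = y * x)
    (hss : ∀ g ∈ Δ, IsSemisimpleElt g)
    (hent : ∀ g ∈ Δ, (∀ i j, (g : Matrix (Fin n) (Fin n) K) i j ∈ R) ∧
      (∀ i j, ((g⁻¹ : GL (Fin n) K) : Matrix (Fin n) (Fin n) K) i j ∈ R)) :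
    Group.FG ↥Δ :=
  stmt_13_general R hR Δ hcomm
    (fun g hg => eq_one_of_isSemisimpleElt_of_isNilpotent_sub_one (hss g hg))
    fun g hg => (hent g hg).1
end

section
/- Let K be a field of characteristic zero, n ≥ 1, and let Γ be a finitely generated subgroup of GL_n(K) all of whose elements are semi-simple (an anisotropic linear group). If there exist finitely many abelian subgroups A₁, …, A_k of Γ such that every element of Γ can be written as a product a₁⋯a_k with a_i ∈ A_i, then Γ is virtually abelian. -/
open Matrix

/-- A group is virtually abelian if it has an abelian subgroup of finite index. -/
def IsVirtuallyAbelian (G : Type*) [Group G] : Prop :=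
  ∃ H : Subgroup G, H.FiniteIndex ∧ ∀ x y : ↥H, x * y = y * x

/-!
Every nontrivial `z ∈ Γ` survives in a homomorphism `Γ → GL n (ZMod p)` whose image has order prime
to `p`. By Jordan's theorem the image then has an abelian subgroup of index bounded in terms of `n`
alone, so `z` lies outside the commutator subgroup of a subgroup of `Γ` of bounded index. A finitely
generated group has only finitely many subgroups of bounded index, so their intersection has finite
index, and it is abelian.

To find `p`, diagonalize each `A i` over a finitely generated ring and specialize that ring to the
ring `O` of `S`-integers of a number field, keeping a unit entry of `z - 1`. As `Oˣ` is finitely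
generated, reducing modulo finitely many primes `p` with `p - 1 ∣ m` makes the image of each `A i`
have at most `m ^ r` elements, hence the image of `Γ` at most `m ^ (r * k)`. If each `p` divided the
order of the reduction modulo `p`, the product of these primes would be at most `m ^ (r * k)`.

Yet for every `R` some `m` and some primes `p`, each of residue degree one in the given number field
`F`, satisfy `p - 1 ∣ m` and `∏ p > m ^ R`. Indeed, let `K` be a large power of `2`. Adding up the
poles at `s = 1` of the zeta functions of `F(ζ_e)`, `e ∣ K`, with weights `φ(e)`, shows that
`∑ gcd(K, p - 1) p ^ (-s)` is at least a multiple of `d(K) log (1 / (s - 1))`; if `∏ p ≤ m ^ R` held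
throughout, it would be at most `16 R log (1 / (s - 1)) + O(1)`.
-/

section SumOverIdeals

open NumberField UniqueFactorizationMonoid

theorem sum_prod_pow_le_prod_inv_one_sub {ι : Type*} {W : Finset ι} {x : ι → ℝ}
    (hx₀ : ∀ i ∈ W, 0 ≤ x i) (hx₁ : ∀ i ∈ W, x i < 1) (E : Finset (ι → ℕ))
    (hE : Set.InjOn (fun e : ι → ℕ ↦ fun i : W ↦ e i) E) :
    ∑ e ∈ E, ∏ i ∈ W, x i ^ e i ≤ ∏ i ∈ W, (1 - x i)⁻¹ := by
  classical
  obtain ⟨N, hN⟩ : ∃ N, ∀ e ∈ E, ∀ i ∈ W, e i < N := by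
    refine ⟨E.sup (fun e ↦ W.sup e) + 1, fun e he i hi ↦ Nat.lt_succ_of_le ?_⟩
    exact (Finset.le_sup (f := e) hi).trans (Finset.le_sup (f := fun e ↦ W.sup e) he)
  calc ∑ e ∈ E, ∏ i ∈ W, x i ^ e i
      = ∑ c ∈ E.image (fun e ↦ fun i : W ↦ e i), ∏ i : W, x i ^ c i := by
        rw [Finset.sum_image hE]
        exact Finset.sum_congr rfl fun e _ ↦ (Finset.prod_coe_sort W fun i ↦ x i ^ e i).symm
    _ ≤ ∑ c ∈ Fintype.piFinset (fun _ : W ↦ Finset.range N), ∏ i : W, x i ^ c i := by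
        refine Finset.sum_le_sum_of_subset_of_nonneg ?_ fun c _ _ ↦
          Finset.prod_nonneg fun i _ ↦ pow_nonneg (hx₀ i i.2) _
        intro c hc
        obtain ⟨e, he, rfl⟩ := Finset.mem_image.mp hc
        exact Fintype.mem_piFinset.mpr fun i ↦ Finset.mem_range.mpr (hN e he i i.2)
    _ = ∏ i : W, ∑ k ∈ Finset.range N, x i ^ k := (Finset.prod_univ_sum _ _).symm
    _ ≤ ∏ i : W, (1 - x i)⁻¹ := by
        refine Finset.prod_le_prod
          (fun i _ ↦ Finset.sum_nonneg fun _ _ ↦ pow_nonneg (hx₀ i i.2) _) fun i _ ↦ ?_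
        rw [← tsum_geometric_of_lt_one (hx₀ i i.2) (hx₁ i i.2)]
        exact (summable_geometric_of_lt_one (hx₀ i i.2) (hx₁ i i.2)).sum_le_tsum _
          fun _ _ ↦ pow_nonneg (hx₀ i i.2) _
    _ = ∏ i ∈ W, (1 - x i)⁻¹ := Finset.prod_coe_sort W fun i ↦ (1 - x i)⁻¹

theorem sum_le_prod_inv_one_sub {α : Type*} [CommMonoidWithZero α] [UniqueFactorizationMonoid α]
    [Subsingleton αˣ] (f : α →* ℝ) {W T : Finset α} (hf₀ : ∀ q ∈ W, 0 ≤ f q)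
    (hf₁ : ∀ q ∈ W, f q < 1) (hT : ∀ a ∈ T, a ≠ 0 ∧ ∀ q ∈ normalizedFactors a, q ∈ W) :
    ∑ a ∈ T, f a ≤ ∏ q ∈ W, (1 - f q)⁻¹ := by
  classical
  let exponents (a : α) (q : α) : ℕ := (normalizedFactors a).count q
  have eq_prod : ∀ a ∈ T, a = ∏ q ∈ W, q ^ exponents a q := fun a ha ↦ by
    rw [← Finset.prod_multiset_count_of_subset _ W
      fun q hq ↦ (hT a ha).2 q (Multiset.mem_toFinset.mp hq)]
    exact (associated_iff_eq.mp (prod_normalizedFactors (hT a ha).1)).symm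
  have determined : ∀ a ∈ T, ∀ b ∈ T, (∀ q ∈ W, exponents a q = exponents b q) → a = b :=
    fun a ha b hb h ↦ by
      rw [eq_prod a ha, eq_prod b hb]
      exact Finset.prod_congr rfl fun q hq ↦ by rw [h q hq]
  calc ∑ a ∈ T, f a = ∑ a ∈ T, ∏ q ∈ W, f q ^ exponents a q := by
        refine Finset.sum_congr rfl fun a ha ↦ ?_
        conv_lhs => rw [eq_prod a ha]
        simp only [map_prod, map_pow]
    _ = ∑ e ∈ T.image exponents, ∏ q ∈ W, f q ^ e q := by
        rw [Finset.sum_image fun a ha b hb h ↦ determined a ha b hb fun q _ ↦ congrFun h q]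
    _ ≤ ∏ q ∈ W, (1 - f q)⁻¹ := by
        refine sum_prod_pow_le_prod_inv_one_sub hf₀ hf₁ _ ?_
        intro e he e' he' h
        obtain ⟨a, ha, rfl⟩ := Finset.mem_image.mp he
        obtain ⟨b, hb, rfl⟩ := Finset.mem_image.mp he'
        rw [determined a ha b hb fun q hq ↦ congrFun h ⟨q, hq⟩]

theorem prod_inv_one_sub_le_exp {ι : Type*} {W : Finset ι} {x : ι → ℝ}
    (hx₀ : ∀ i ∈ W, 0 ≤ x i) (hx : ∀ i ∈ W, x i ≤ 1 / 2) :
    ∏ i ∈ W, (1 - x i)⁻¹ ≤ Real.exp (2 * ∑ i ∈ W, x i) := by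
  rw [Finset.mul_sum, Real.exp_sum]
  refine Finset.prod_le_prod (fun i hi ↦ inv_nonneg.mpr (by linarith [hx i hi])) fun i hi ↦ ?_
  refine le_trans ?_ (Real.add_one_le_exp _)
  rw [inv_le_iff_one_le_mul₀ (by linarith [hx i hi])]
  nlinarith [hx₀ i hi, hx i hi]

/-- The rational primes above which the number field `L` has a prime of residue degree one. Such a
prime is recorded by the reduction map `𝓞 L → ZMod p` it induces. -/
def degreeOnePrimes (L : Type*) [Field L] : Set ℕ := {p | p.Prime ∧ Nonempty (𝓞 L →+* ZMod p)}

theorem summable_indicator_rpow_neg (S : Set ℕ) {s : ℝ} (hs : 1 < s) :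
    Summable (S.indicator fun p : ℕ ↦ (p : ℝ) ^ (-s)) :=
  (Real.summable_nat_rpow.mpr (by linarith)).indicator S

theorem indicator_rpow_nonneg (S : Set ℕ) (s : ℝ) (p : ℕ) :
    0 ≤ S.indicator (fun p : ℕ ↦ (p : ℝ) ^ s) p :=
  Set.indicator_nonneg (fun _ _ ↦ by positivity) p

variable {L : Type*} [Field L] [NumberField L]

theorem card_primes_containing_le_finrank {p : ℕ} (hp : p.Prime) {W : Finset (Ideal (𝓞 L))}
    (hW : ∀ q ∈ W, Prime q ∧ (p : 𝓞 L) ∈ q) : W.card ≤ Module.finrank ℚ L := by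
  classical
  have : (Ideal.span {(p : ℤ)}).IsMaximal :=
    PrincipalIdealRing.isMaximal_of_irreducible (Nat.prime_iff_prime_int.mp hp).irreducible
  have := (IsDedekindDomain.primesOver_finite (Ideal.span {(p : ℤ)}) (𝓞 L)).fintype
  have subset_primesOver : W ⊆ ((Ideal.span {(p : ℤ)}).primesOver (𝓞 L)).toFinset :=
    fun q hq ↦ by
      have q_prime := Ideal.isPrime_of_prime (hW q hq).1
      refine Set.mem_toFinset.mpr ⟨q_prime, ?_⟩
      rw [Ideal.liesOver_iff_dvd_map q_prime.ne_top, Ideal.map_span, Set.image_singleton,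
        Ideal.dvd_span_singleton]
      simpa using (hW q hq).2
  calc W.card ≤ Fintype.card ((Ideal.span {(p : ℤ)}).primesOver (𝓞 L)) :=
        (Finset.card_le_card subset_primesOver).trans_eq (Set.toFinset_card _)
    _ ≤ ∑ q : (Ideal.span {(p : ℤ)}).primesOver (𝓞 L),
          q.1.ramificationIdx ℤ * q.1.inertiaDeg ℤ := by
        rw [← Finset.card_univ, Finset.card_eq_sum_ones]
        refine Finset.sum_le_sum fun q _ ↦ ?_
        have : q.1.IsPrime := q.2.1
        exact Nat.mul_pos (Ideal.ramificationIdx_pos ..) (Ideal.inertiaDeg_pos ..)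
    _ = Module.finrank ℚ L := by
        rw [Ideal.sum_ramification_inertia_eq_finrank, RingOfIntegers.rank]

theorem mem_degreeOnePrimes_of_absNorm_eq {q : Ideal (𝓞 L)} {p : ℕ} (hp : p.Prime)
    (hq : Ideal.absNorm q = p) : p ∈ degreeOnePrimes L := by
  have card_eq : Nat.card (𝓞 L ⧸ q) = p := hq
  have : Finite (𝓞 L ⧸ q) := Nat.finite_of_card_ne_zero (card_eq ▸ hp.ne_zero)
  have := Fintype.ofFinite (𝓞 L ⧸ q)
  rw [Nat.card_eq_fintype_card] at card_eq
  exact ⟨hp, ⟨((ZMod.ringEquivOfPrime _ hp card_eq).symm : _ →+* _).comp (Ideal.Quotient.mk q)⟩⟩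

theorem absNorm_rpow_neg_le_half {q : Ideal (𝓞 L)} (hq : Prime q) {s : ℝ} (hs : 1 ≤ s) :
    (Ideal.absNorm q : ℝ) ^ (-s) ≤ 1 / 2 := by
  have : Ideal.absNorm q ≠ 0 := by simpa [Ideal.absNorm_eq_zero_iff] using hq.ne_zero
  have : Ideal.absNorm q ≠ 1 := by simpa [Ideal.absNorm_eq_one_iff] using hq.not_isUnit
  have two_le : (2 : ℝ) ≤ Ideal.absNorm q := by exact_mod_cast (by lia : 2 ≤ Ideal.absNorm q)
  calc (Ideal.absNorm q : ℝ) ^ (-s) ≤ (Ideal.absNorm q : ℝ) ^ (-1 : ℝ) :=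
        Real.rpow_le_rpow_of_exponent_le (by linarith) (by linarith)
    _ ≤ 1 / 2 := by
        rw [Real.rpow_neg_one, one_div]
        exact inv_anti₀ two_pos two_le

theorem exists_prime_mem_and_absNorm_rpow_neg_le {q : Ideal (𝓞 L)} (hq : Prime q) {s : ℝ}
    (hs : 1 ≤ s) : ∃ p : ℕ, p.Prime ∧ (p : 𝓞 L) ∈ q ∧ (Ideal.absNorm q : ℝ) ^ (-s) ≤
      (degreeOnePrimes L).indicator (fun p : ℕ ↦ (p : ℝ) ^ (-s)) p + (p : ℝ) ^ (-2 : ℝ) := by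
  have : q.IsMaximal := (Ideal.isPrime_of_prime hq).isMaximal hq.ne_zero
  obtain ⟨p, f, hf, hpq, hp, hN⟩ := Ideal.exists_prime_and_absNorm_eq_pow q
  refine ⟨p, hp, hpq, ?_⟩
  rcases Nat.eq_or_lt_of_le (Nat.one_le_iff_ne_zero.mpr hf.ne') with rfl | hf
  · rw [pow_one] at hN
    rw [Set.indicator_of_mem (mem_degreeOnePrimes_of_absNorm_eq hp hN), hN]
    exact le_add_of_nonneg_right (by positivity)
  · refine le_add_of_nonneg_of_le (indicator_rpow_nonneg _ _ p) ?_
    have one_le : (1 : ℝ) ≤ p := by exact_mod_cast hp.one_le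
    rw [hN, Nat.cast_pow, ← Real.rpow_natCast_mul (by positivity)]
    have : (2 : ℝ) ≤ f := by exact_mod_cast hf
    exact Real.rpow_le_rpow_of_exponent_le one_le (by nlinarith)

theorem sum_primes_absNorm_rpow_neg_le {s : ℝ} (hs : 1 < s) {W : Finset (Ideal (𝓞 L))}
    (hW : ∀ q ∈ W, Prime q) :
    ∑ q ∈ W, (Ideal.absNorm q : ℝ) ^ (-s) ≤ Module.finrank ℚ L *
      (∑' p, (degreeOnePrimes L).indicator (fun p : ℕ ↦ (p : ℝ) ^ (-s)) p +
        ∑' p : ℕ, (p : ℝ) ^ (-2 : ℝ)) := by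
  classical
  have summable₁ := summable_indicator_rpow_neg (degreeOnePrimes L) hs
  have summable₂ : Summable fun p : ℕ ↦ (p : ℝ) ^ (-2 : ℝ) :=
    Real.summable_nat_rpow.mpr (by norm_num)
  set h : ℕ → ℝ := fun p ↦
    (degreeOnePrimes L).indicator (fun p : ℕ ↦ (p : ℝ) ^ (-s)) p + (p : ℝ) ^ (-2 : ℝ)
  have h_nonneg (p : ℕ) : 0 ≤ h p := add_nonneg (indicator_rpow_nonneg _ _ p) (by positivity)
  choose! under under_prime under_mem le_h using
    fun q (hq : Prime q) ↦ exists_prime_mem_and_absNorm_rpow_neg_le (L := L) hq hs.le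
  calc ∑ q ∈ W, (Ideal.absNorm q : ℝ) ^ (-s)
      ≤ ∑ q ∈ W, h (under q) := Finset.sum_le_sum fun q hq ↦ le_h q (hW q hq)
    _ = ∑ p ∈ W.image under, (W.filter (under · = p)).card • h p := Finset.sum_comp h under
    _ ≤ ∑ p ∈ W.image under, (Module.finrank ℚ L : ℝ) * h p := by
        refine Finset.sum_le_sum fun p hp ↦ ?_
        obtain ⟨q₀, hq₀, rfl⟩ := Finset.mem_image.mp hp
        rw [nsmul_eq_mul]
        gcongr
        · exact h_nonneg _
        · refine card_primes_containing_le_finrank (under_prime q₀ (hW q₀ hq₀)) fun q hq ↦ ?_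
          obtain ⟨hq, h_under⟩ := Finset.mem_filter.mp hq
          exact ⟨hW q hq, h_under ▸ under_mem q (hW q hq)⟩
    _ = Module.finrank ℚ L * ∑ p ∈ W.image under, h p := (Finset.mul_sum ..).symm
    _ ≤ Module.finrank ℚ L * ∑' p, h p := by
        gcongr
        exact (summable₁.add summable₂).sum_le_tsum _ fun p _ ↦ h_nonneg p
    _ = _ := by rw [summable₁.tsum_add summable₂]

theorem sum_ideals_absNorm_rpow_neg_le {s : ℝ} (hs : 1 < s) {T : Finset (Ideal (𝓞 L))}
    (hT : ∀ I ∈ T, I ≠ 0) :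
    ∑ I ∈ T, (Ideal.absNorm I : ℝ) ^ (-s) ≤ Real.exp (2 * (Module.finrank ℚ L *
      (∑' p, (degreeOnePrimes L).indicator (fun p : ℕ ↦ (p : ℝ) ^ (-s)) p +
        ∑' p : ℕ, (p : ℝ) ^ (-2 : ℝ)))) := by
  classical
  let W := T.biUnion fun I ↦ (normalizedFactors I).toFinset
  have hW : ∀ q ∈ W, Prime q := fun q hq ↦ by
    obtain ⟨I, -, hI⟩ := Finset.mem_biUnion.mp hq
    exact prime_of_normalized_factor q (Multiset.mem_toFinset.mp hI)
  let norm_rpow : Ideal (𝓞 L) →* ℝ :=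
    { toFun := fun I ↦ (Ideal.absNorm I : ℝ) ^ (-s)
      map_one' := by simp
      map_mul' := fun I J ↦ by
        rw [map_mul, Nat.cast_mul, Real.mul_rpow (by positivity) (by positivity)] }
  have le_half : ∀ q ∈ W, norm_rpow q ≤ 1 / 2 := fun q hq ↦ absNorm_rpow_neg_le_half (hW q hq) hs.le
  have nonneg : ∀ q ∈ W, 0 ≤ norm_rpow q := fun q _ ↦
    Real.rpow_nonneg (Nat.cast_nonneg _) _
  calc ∑ I ∈ T, norm_rpow I ≤ ∏ q ∈ W, (1 - norm_rpow q)⁻¹ :=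
        sum_le_prod_inv_one_sub norm_rpow nonneg (fun q hq ↦ by linarith [le_half q hq])
          fun I hI ↦ ⟨hT I hI, fun q hq ↦
            Finset.mem_biUnion.mpr ⟨I, hI, Multiset.mem_toFinset.mpr hq⟩⟩
    _ ≤ Real.exp (2 * ∑ q ∈ W, norm_rpow q) := prod_inv_one_sub_le_exp nonneg le_half
    _ ≤ _ := by
        gcongr
        exact sum_primes_absNorm_rpow_neg_le hs hW

variable (L) in
theorem norm_dedekindZeta_le {s B : ℝ}
    (hB : ∀ T : Finset (Ideal (𝓞 L)), (∀ I ∈ T, I ≠ 0) →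
      ∑ I ∈ T, (Ideal.absNorm I : ℝ) ^ (-s) ≤ B) : ‖dedekindZeta L s‖ ≤ B := by
  classical
  set term : ℕ → ℂ :=
    LSeries.term (fun n ↦ (Nat.card {I : Ideal (𝓞 L) // Ideal.absNorm I = n} : ℂ)) s
  let idealsBelow (N : ℕ) : Finset (Ideal (𝓞 L)) :=
    ((Ideal.finite_setOfPred_absNorm_le N).toFinset).filter fun I ↦ I ≠ 0 ∧ Ideal.absNorm I < N
  have norm_term {n N : ℕ} (hn : n < N) : ‖term n‖ =
      ∑ I ∈ idealsBelow N with Ideal.absNorm I = n, (Ideal.absNorm I : ℝ) ^ (-s) := by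
    have same_norm : ∀ I ∈ (idealsBelow N).filter (Ideal.absNorm · = n),
        (Ideal.absNorm I : ℝ) ^ (-s) = (n : ℝ) ^ (-s) :=
      fun I hI ↦ by rw [(Finset.mem_filter.mp hI).2]
    rw [Finset.sum_congr rfl same_norm, Finset.sum_const, nsmul_eq_mul]
    rcases eq_or_ne n 0 with rfl | hn₀
    · suffices (idealsBelow N).filter (Ideal.absNorm · = 0) = ∅ by simp [this, term]
      ext I
      simp +contextual [idealsBelow, Ideal.absNorm_eq_zero_iff]
    · simp only [term]
      rw [LSeries.term_of_ne_zero hn₀, norm_div, Complex.norm_natCast,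
        Complex.norm_natCast_cpow_of_pos (Nat.pos_of_ne_zero hn₀), Complex.ofReal_re,
        Real.rpow_neg (by positivity), div_eq_mul_inv, Nat.subtype_card]
      intro I
      simp only [idealsBelow, Finset.mem_filter, Set.Finite.mem_toFinset, Set.mem_ofPred_eq]
      grind [Ideal.absNorm_eq_zero_iff]
  have partial_sum_le (N : ℕ) : ∑ n ∈ Finset.range N, ‖term n‖ ≤ B := by
    rw [Finset.sum_congr rfl fun n hn ↦ norm_term (Finset.mem_range.mp hn),
      Finset.sum_fiberwise_of_maps_to fun I hI ↦ by simpa using (Finset.mem_filter.mp hI).2.2]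
    exact hB _ fun I hI ↦ (Finset.mem_filter.mp hI).2.1
  have summable : Summable fun n ↦ ‖term n‖ :=
    summable_of_sum_range_le (fun _ ↦ norm_nonneg _) partial_sum_le
  exact (norm_tsum_le_tsum_norm summable).trans (summable.tsum_le_of_sum_range_le partial_sum_le)

variable (L) in
theorem exists_log_sub_le_tsum_degreeOnePrimes :
    ∃ C : ℝ, ∀ᶠ s : ℝ in nhdsWithin 1 (Set.Ioi 1), Real.log (1 / (s - 1)) - C ≤
      2 * Module.finrank ℚ L *
        ∑' p, (degreeOnePrimes L).indicator (fun p : ℕ ↦ (p : ℝ) ^ (-s)) p := by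
  set κ := dedekindZeta_residue L
  have hκ : 0 < κ := dedekindZeta_residue_pos L
  have tendsto_residue : Filter.Tendsto (fun s : ℝ ↦ (s - 1) * ‖dedekindZeta L s‖)
      (nhdsWithin 1 (Set.Ioi 1)) (nhds κ) := by
    have := (tendsto_sub_one_mul_dedekindZeta_nhdsGT L).norm
    rw [Complex.norm_real, Real.norm_of_nonneg hκ.le] at this
    refine this.congr' ?_
    filter_upwards [self_mem_nhdsWithin] with s (hs : 1 < s)
    rw [norm_mul, ← Complex.ofReal_one, ← Complex.ofReal_sub, Complex.norm_real,
      Real.norm_of_nonneg (by linarith)]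
  refine ⟨2 * (Module.finrank ℚ L * ∑' p : ℕ, (p : ℝ) ^ (-2 : ℝ)) - Real.log (κ / 2), ?_⟩
  filter_upwards [tendsto_residue.eventually (lt_mem_nhds (half_lt_self hκ)), self_mem_nhdsWithin]
    with s hs (hs1 : 1 < s)
  have hpos : 0 < s - 1 := by linarith
  have zeta_le := norm_dedekindZeta_le L fun T ↦ sum_ideals_absNorm_rpow_neg_le (L := L) hs1
  have log_le := Real.log_le_log (by positivity) <| calc
    κ / 2 * (1 / (s - 1)) ≤ ‖dedekindZeta L s‖ := by
      rw [mul_one_div, div_le_iff₀ hpos, mul_comm]; exact hs.le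
    _ ≤ _ := zeta_le
  rw [Real.log_exp, Real.log_mul (by positivity) (by positivity)] at log_le
  linarith

end SumOverIdeals

section CyclotomicTowers

open NumberField

theorem degreeOnePrimes_mono {F L : Type*} [Field F] [Field L] [Algebra F L] :
    degreeOnePrimes L ⊆ degreeOnePrimes F :=
  fun _ ⟨hp, ⟨ψ⟩⟩ ↦ ⟨hp, ⟨ψ.comp (algebraMap (𝓞 F) (𝓞 L))⟩⟩

variable (F : Type*) [Field F] [NumberField F]

theorem dvd_sub_one_of_mem_degreeOnePrimes_cyclotomicField {e p : ℕ} [NeZero e]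
    (hp : p ∈ degreeOnePrimes (CyclotomicField e F)) (hpe : ¬ p ∣ e) : e ∣ p - 1 := by
  obtain ⟨p_prime, ⟨ψ⟩⟩ := hp
  have : Fact p.Prime := ⟨p_prime⟩
  have : NeZero (e : ZMod p) := ⟨by rwa [Ne, ZMod.natCast_eq_zero_iff]⟩
  have hζ := (IsCyclotomicExtension.zeta_spec e F (CyclotomicField e F)).toInteger_isPrimitiveRoot
  have hψζ := (hζ.isRoot_cyclotomic (NeZero.pos e)).map (f := ψ)
  rw [Polynomial.map_cyclotomic, Polynomial.isRoot_cyclotomic_iff] at hψζ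
  exact hψζ.dvd_of_pow_eq_one _ (ZMod.pow_card_sub_one_eq_one (hψζ.ne_zero (NeZero.ne e)))

theorem finrank_cyclotomicField_le (e : ℕ) [NeZero e] :
    Module.finrank ℚ (CyclotomicField e F) ≤ Module.finrank ℚ F * e.totient := by
  have hζ := IsCyclotomicExtension.zeta_spec e F (CyclotomicField e F)
  rw [← Module.finrank_mul_finrank ℚ F (CyclotomicField e F), (hζ.powerBasis F).finrank,
    IsPrimitiveRoot.powerBasis_dim, ← Polynomial.natDegree_cyclotomic e F]
  refine Nat.mul_le_mul_left _ <|
    Polynomial.natDegree_le_of_dvd (minpoly.dvd _ _ ?_) (Polynomial.cyclotomic_ne_zero _ _)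
  rw [Polynomial.aeval_def, ← Polynomial.eval_map, Polynomial.map_cyclotomic]
  exact hζ.isRoot_cyclotomic (NeZero.pos e)

theorem sum_totient_divisors_filter_dvd {K : ℕ} (hK : K ≠ 0) (q : ℕ) :
    ∑ e ∈ K.divisors with e ∣ q, e.totient = K.gcd q := by
  rw [← Nat.sum_totient (K.gcd q)]
  congr 1
  ext e
  simp [Nat.dvd_gcd_iff, hK]

theorem tsum_indicator_rpow_neg_le_add_card (S : Set ℕ) (B : Finset ℕ) {s : ℝ} (hs : 1 < s) :
    ∑' p, S.indicator (fun p : ℕ ↦ (p : ℝ) ^ (-s)) p ≤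
      ∑' p, (S \ B).indicator (fun p : ℕ ↦ (p : ℝ) ^ (-s)) p + B.card := by
  classical
  have term_le_one (p : ℕ) : (p : ℝ) ^ (-s) ≤ 1 := by
    rcases Nat.eq_zero_or_pos p with rfl | hp
    · simp [Real.zero_rpow (by linarith : -s ≠ 0)]
    · exact Real.rpow_le_one_of_one_le_of_nonpos (by exact_mod_cast hp) (by linarith)
  have hasSum_card : HasSum (fun p ↦ if p ∈ B then (1 : ℝ) else 0) B.card := by
    simpa using hasSum_sum_of_ne_finset_zero (s := B) (f := fun p ↦ if p ∈ B then (1 : ℝ) else 0)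
      fun p hp ↦ if_neg hp
  have summable_diff := summable_indicator_rpow_neg (S \ B) hs
  rw [← hasSum_card.tsum_eq, ← summable_diff.tsum_add hasSum_card.summable]
  refine (summable_indicator_rpow_neg S hs).tsum_le_tsum (fun p ↦ ?_)
    (summable_diff.add hasSum_card.summable)
  have := term_le_one p
  have : 0 ≤ (p : ℝ) ^ (-s) := by positivity
  by_cases hS : p ∈ S <;> by_cases hB : p ∈ B <;> simp [*]

theorem summable_indicator_gcd_mul_rpow_neg (S : Set ℕ) {K : ℕ} (hK : K ≠ 0) {s : ℝ}
    (hs : 1 < s) :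
    Summable (S.indicator fun p : ℕ ↦ (K.gcd (p - 1) : ℝ) * (p : ℝ) ^ (-s)) := by
  refine Summable.indicator (Summable.of_nonneg_of_le (fun _ ↦ by positivity) (fun p ↦ ?_)
    ((Real.summable_nat_rpow (p := -s).mpr (by linarith)).mul_left (K : ℝ))) S
  gcongr
  exact Nat.gcd_le_left _ (Nat.pos_of_ne_zero hK)

theorem sum_totient_mul_tsum_cyclotomicField_le {K : ℕ} (hK : K ≠ 0) {B : Finset ℕ}
    (hB : K.primeFactors ⊆ B) {s : ℝ} (hs : 1 < s) :
    ∑ e ∈ K.divisors, e.totient * ∑' p, (degreeOnePrimes (CyclotomicField e F) \ B).indicator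
        (fun p : ℕ ↦ (p : ℝ) ^ (-s)) p ≤
      ∑' p, (degreeOnePrimes F \ B).indicator
        (fun p : ℕ ↦ (K.gcd (p - 1) : ℝ) * (p : ℝ) ^ (-s)) p := by
  have summable (e : ℕ) := (summable_indicator_rpow_neg
    (degreeOnePrimes (CyclotomicField e F) \ B) hs).mul_left (e.totient : ℝ)
  simp_rw [← tsum_mul_left]
  rw [← Summable.tsum_finsetSum fun e _ ↦ summable e]
  refine (summable_sum fun e _ ↦ summable e).tsum_le_tsum (fun p ↦ ?_)
    (summable_indicator_gcd_mul_rpow_neg _ hK hs)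
  by_cases hp : p ∈ degreeOnePrimes F \ B
  · rw [Set.indicator_of_mem hp, ← sum_totient_divisors_filter_dvd hK, Nat.cast_sum,
      Finset.sum_mul, Finset.sum_filter]
    refine Finset.sum_le_sum fun e he ↦ ?_
    have : NeZero e := ⟨(Nat.pos_of_mem_divisors he).ne'⟩
    by_cases hpe : p ∈ degreeOnePrimes (CyclotomicField e F) \ B
    · have not_dvd : ¬ p ∣ e := fun h ↦
        hp.2 (hB (Nat.mem_primeFactors.mpr ⟨hp.1.1, h.trans (Nat.dvd_of_mem_divisors he), hK⟩))
      rw [Set.indicator_of_mem hpe,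
        if_pos (dvd_sub_one_of_mem_degreeOnePrimes_cyclotomicField F hpe.1 not_dvd)]
    · rw [Set.indicator_of_notMem hpe, mul_zero]
      split_ifs <;> positivity
  · rw [Set.indicator_of_notMem hp]
    refine (Finset.sum_eq_zero fun e _ ↦ ?_).le
    rw [Set.indicator_of_notMem fun h ↦ hp ⟨degreeOnePrimes_mono h.1, h.2⟩, mul_zero]

theorem exists_log_sub_le_totient_mul_tsum_cyclotomicField (e : ℕ) [NeZero e] (B : Finset ℕ) :
    ∃ C : ℝ, ∀ᶠ s : ℝ in nhdsWithin 1 (Set.Ioi 1), Real.log (1 / (s - 1)) - C ≤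
      2 * Module.finrank ℚ F * (e.totient * ∑' p,
        (degreeOnePrimes (CyclotomicField e F) \ B).indicator (fun p : ℕ ↦ (p : ℝ) ^ (-s)) p) := by
  set d := Module.finrank ℚ (CyclotomicField e F)
  obtain ⟨C, hC⟩ := exists_log_sub_le_tsum_degreeOnePrimes (CyclotomicField e F)
  refine ⟨C + 2 * d * B.card, ?_⟩
  filter_upwards [hC, self_mem_nhdsWithin] with s hs (hs₁ : 1 < s)
  set σ := ∑' p, (degreeOnePrimes (CyclotomicField e F) \ B).indicator
    (fun p : ℕ ↦ (p : ℝ) ^ (-s)) p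
  have σ_nonneg : 0 ≤ σ := tsum_nonneg fun p ↦ indicator_rpow_nonneg _ _ p
  have remove_B := tsum_indicator_rpow_neg_le_add_card (degreeOnePrimes (CyclotomicField e F)) B hs₁
  have degree_le : (d : ℝ) ≤ Module.finrank ℚ F * e.totient := by
    exact_mod_cast finrank_cyclotomicField_le F e
  calc Real.log (1 / (s - 1)) - (C + 2 * d * B.card)
      ≤ 2 * d * (σ + B.card) - 2 * d * B.card := by
        linarith [mul_le_mul_of_nonneg_left remove_B (by positivity : (0 : ℝ) ≤ 2 * d)]
    _ = 2 * (d * σ) := by ring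
    _ ≤ 2 * (Module.finrank ℚ F * e.totient * σ) := by gcongr
    _ = _ := by ring

theorem exists_card_divisors_mul_log_sub_le {K : ℕ} (hK : K ≠ 0) (B : Finset ℕ) :
    ∃ C : ℝ, ∀ᶠ s : ℝ in nhdsWithin 1 (Set.Ioi 1), K.divisors.card * Real.log (1 / (s - 1)) - C ≤
      2 * Module.finrank ℚ F * ∑' p, (degreeOnePrimes F \ B).indicator
        (fun p : ℕ ↦ (K.gcd (p - 1) : ℝ) * (p : ℝ) ^ (-s)) p := by
  classical
  set B' := B ∪ K.primeFactors
  choose! C hC using fun e (he : NeZero e) ↦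
    exists_log_sub_le_totient_mul_tsum_cyclotomicField F e B'
  refine ⟨∑ e ∈ K.divisors, C e, ?_⟩
  have eventually_all := (Filter.eventually_all_finset K.divisors).mpr fun e he ↦
    hC e ⟨(Nat.pos_of_mem_divisors he).ne'⟩
  filter_upwards [eventually_all, self_mem_nhdsWithin] with s hs (hs₁ : 1 < s)
  calc K.divisors.card * Real.log (1 / (s - 1)) - ∑ e ∈ K.divisors, C e
      = ∑ e ∈ K.divisors, (Real.log (1 / (s - 1)) - C e) := by
        rw [Finset.sum_sub_distrib, Finset.sum_const, nsmul_eq_mul]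
    _ ≤ 2 * Module.finrank ℚ F * ∑ e ∈ K.divisors, (e.totient * ∑' p,
          (degreeOnePrimes (CyclotomicField e F) \ B').indicator
            (fun p : ℕ ↦ (p : ℝ) ^ (-s)) p) := by
        rw [Finset.mul_sum]
        exact Finset.sum_le_sum hs
    _ ≤ 2 * Module.finrank ℚ F * ∑' p, (degreeOnePrimes F \ B').indicator
          (fun p : ℕ ↦ (K.gcd (p - 1) : ℝ) * (p : ℝ) ^ (-s)) p := by
        gcongr
        exact sum_totient_mul_tsum_cyclotomicField_le F hK Finset.subset_union_right hs₁
    _ ≤ _ := by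
        gcongr ?_ * ?_
        refine (summable_indicator_gcd_mul_rpow_neg _ hK hs₁).tsum_le_tsum (fun p ↦ ?_)
          (summable_indicator_gcd_mul_rpow_neg _ hK hs₁)
        refine Set.indicator_le_indicator_of_subset ?_ (fun _ ↦ by positivity) p
        exact Set.sdiff_subset_sdiff_right (by exact_mod_cast Finset.subset_union_left)

end CyclotomicTowers

section PrimesWithSmoothPredecessor

open Filter Topology

theorem hasSum_ite_dvd_rpow_neg {x : ℕ} (hx : x ≠ 0) {u : ℝ} (hu : 1 < u) :
    HasSum (fun j : ℕ ↦ if x ∣ j then (j : ℝ) ^ (-u) else 0)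
      ((x : ℝ) ^ (-u) * ∑' j : ℕ, (j : ℝ) ^ (-u)) := by
  have hasSum_mul : HasSum (fun j : ℕ ↦ ((x * j : ℕ) : ℝ) ^ (-u))
      ((x : ℝ) ^ (-u) * ∑' j : ℕ, (j : ℝ) ^ (-u)) := by
    simp_rw [Nat.cast_mul, Real.mul_rpow (Nat.cast_nonneg _) (Nat.cast_nonneg _)]
    exact (Real.summable_nat_rpow.mpr (by linarith)).hasSum.mul_left _
  refine ((mul_right_injective₀ hx).hasSum_iff fun j hj ↦ if_neg ?_).mp ?_
  · rintro ⟨i, rfl⟩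
    exact hj ⟨i, rfl⟩
  · simpa [Function.comp_def] using hasSum_mul

theorem rpow_neg_mul_log_le {u : ℝ} (hu : 1 < u) (j : ℕ) :
    (j : ℝ) ^ (-u) * Real.log j ≤ 2 / (u - 1) * (j : ℝ) ^ (-((u + 1) / 2)) := by
  have hε : 0 < (u - 1) / 2 := by linarith
  rcases Nat.eq_zero_or_pos j with rfl | hj
  · simp [Real.zero_rpow (by linarith : -((u + 1) / 2) ≠ 0)]
  calc (j : ℝ) ^ (-u) * Real.log j ≤
        (j : ℝ) ^ (-u) * ((j : ℝ) ^ ((u - 1) / 2) / ((u - 1) / 2)) := by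
        gcongr
        exact Real.log_natCast_le_rpow_div j hε
    _ = 2 / (u - 1) * ((j : ℝ) ^ (-u) * (j : ℝ) ^ ((u - 1) / 2)) := by field_simp
    _ = _ := by
        rw [← Real.rpow_add (by exact_mod_cast hj)]
        congr 2
        ring

theorem summable_rpow_neg_mul_log {u : ℝ} (hu : 1 < u) :
    Summable fun j : ℕ ↦ (j : ℝ) ^ (-u) * Real.log j :=
  .of_nonneg_of_le (fun j ↦ mul_nonneg (by positivity) (Real.log_natCast_nonneg j))
    (rpow_neg_mul_log_le hu) ((Real.summable_nat_rpow.mpr (by linarith)).mul_left _)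

theorem eventually_tsum_rpow_neg_mul_log_le :
    ∀ᶠ u : ℝ in 𝓝[>] 1, ∑' j : ℕ, (j : ℝ) ^ (-u) * Real.log j ≤
      16 / (u - 1) * ∑' j : ℕ, (j : ℝ) ^ (-u) := by
  have tendsto_one : Tendsto (fun s : ℝ ↦ (s - 1) * ∑' j : ℕ, (j : ℝ) ^ (-s)) (𝓝[>] 1) (𝓝 1) := by
    simpa only [one_div, ← Real.rpow_neg (Nat.cast_nonneg _)] using
      tendsto_sub_mul_tsum_nat_rpow
  have tendsto_midpoint : Tendsto (fun u : ℝ ↦ (u + 1) / 2) (𝓝[>] 1) (𝓝[>] 1) := by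
    refine tendsto_nhdsWithin_iff.mpr ⟨?_, ?_⟩
    · exact (Continuous.tendsto' (by fun_prop) 1 1 (by norm_num)).mono_left nhdsWithin_le_nhds
    · filter_upwards [self_mem_nhdsWithin] with u (hu : 1 < u)
      exact show 1 < (u + 1) / 2 by linarith
  filter_upwards [tendsto_midpoint.eventually (tendsto_one.eventually (gt_mem_nhds one_lt_two)),
    tendsto_one.eventually (lt_mem_nhds one_half_lt_one), self_mem_nhdsWithin]
    with u midpoint_lt lt_self (hu : 1 < u)
  have : 0 < u - 1 := by linarith
  have half_pos : 0 < (u + 1) / 2 - 1 := by linarith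
  have midpoint_le : ∑' j : ℕ, (j : ℝ) ^ (-((u + 1) / 2)) ≤ 8 * ∑' j : ℕ, (j : ℝ) ^ (-u) := by
    refine le_of_mul_le_mul_left ?_ half_pos
    linarith
  calc ∑' j : ℕ, (j : ℝ) ^ (-u) * Real.log j
      ≤ ∑' j : ℕ, 2 / (u - 1) * (j : ℝ) ^ (-((u + 1) / 2)) :=
        (summable_rpow_neg_mul_log hu).tsum_le_tsum (rpow_neg_mul_log_le hu)
          ((Real.summable_nat_rpow.mpr (by linarith)).mul_left _)
    _ = 2 / (u - 1) * ∑' j : ℕ, (j : ℝ) ^ (-((u + 1) / 2)) := tsum_mul_left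
    _ ≤ 2 / (u - 1) * (8 * ∑' j : ℕ, (j : ℝ) ^ (-u)) := by gcongr
    _ = 16 / (u - 1) * ∑' j : ℕ, (j : ℝ) ^ (-u) := by ring

theorem sum_rpow_neg_le_of_sum_log_mul_rpow_neg_le {ι : Type*} {P : Finset ι} {x : ι → ℝ}
    (hx : ∀ i ∈ P, 0 < x i) {a b t : ℝ}
    (h : ∀ u ∈ Set.Ioc 1 t, ∑ i ∈ P, Real.log (x i) * x i ^ (-u) ≤ a + b / (u - 1))
    {s : ℝ} (hs : s ∈ Set.Ioc 1 t) :
    ∑ i ∈ P, x i ^ (-s) ≤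
      ∑ i ∈ P, x i ^ (-t) + a * (t - s) + b * (Real.log (t - 1) - Real.log (s - 1)) := by
  -- The hypothesis on `u` says that the derivative of `G` is nonnegative.
  let G (u : ℝ) : ℝ := ∑ i ∈ P, x i ^ (-u) + a * u + b * Real.log (u - 1)
  have hasDerivAt_G : ∀ u ∈ Set.Ioc 1 t,
      HasDerivAt G (-∑ i ∈ P, Real.log (x i) * x i ^ (-u) + a + b / (u - 1)) u := fun u hu ↦ by
    have hasDerivAt_log : HasDerivAt (fun u ↦ Real.log (u - 1)) (1 / (u - 1)) u :=
      ((hasDerivAt_id u).sub_const 1).log (sub_ne_zero.mpr hu.1.ne')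
    have hasDerivAt_rpow : ∀ i ∈ P, HasDerivAt (fun u ↦ x i ^ (-u))
        (-(Real.log (x i) * x i ^ (-u))) u := fun i hi ↦ by
      simpa using (hasDerivAt_neg u).const_rpow (hx i hi)
    convert! ((HasDerivAt.fun_sum hasDerivAt_rpow).add ((hasDerivAt_id u).const_mul a)).add
      (hasDerivAt_log.const_mul b) using 1
    rw [Finset.sum_neg_distrib]
    ring
  have monotone_G : MonotoneOn G (Set.Ioc 1 t) :=
    monotoneOn_of_deriv_nonneg (convex_Ioc 1 t)
      (fun u hu ↦ (hasDerivAt_G u hu).continuousAt.continuousWithinAt)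
      (fun u hu ↦ (hasDerivAt_G u (interior_subset hu)).differentiableAt.differentiableWithinAt)
      fun u hu ↦ by
        rw [(hasDerivAt_G u (interior_subset hu)).deriv]
        linarith [h u (interior_subset hu)]
  have := monotone_G hs ⟨hs.1.trans_le hs.2, le_rfl⟩ hs.2
  simp only [G] at this
  linarith

variable {S : Set ℕ} {R K : ℕ}

theorem sum_log_le_of_quotient_dvd (hprime : ∀ p ∈ S, p.Prime)
    (hS : ∀ m ≠ 0, ∀ P : Finset ℕ, ↑P ⊆ S → (∀ p ∈ P, p - 1 ∣ m) → ∏ p ∈ P, p ≤ m ^ R)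
    (hK : K ≠ 0) {P : Finset ℕ} (hP : ↑P ⊆ S) {j : ℕ} (hj : j ≠ 0) :
    ∑ p ∈ P with (p - 1) / K.gcd (p - 1) ∣ j, Real.log p ≤ R * (Real.log K + Real.log j) := by
  set Q := {p ∈ P | (p - 1) / K.gcd (p - 1) ∣ j}
  have hQ : ↑Q ⊆ S := fun p hp ↦ hP (Finset.mem_filter.mp hp).1
  have sub_one_dvd : ∀ p ∈ Q, p - 1 ∣ K * j := fun p hp ↦ by
    rw [← Nat.mul_div_cancel' (Nat.gcd_dvd_right K (p - 1))]
    exact mul_dvd_mul (Nat.gcd_dvd_left _ _) (Finset.mem_filter.mp hp).2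
  have pos : ∀ p ∈ Q, (0 : ℝ) < p := fun p hp ↦ by exact_mod_cast (hprime p (hQ hp)).pos
  rw [← Real.log_prod fun p hp ↦ (pos p hp).ne', ← Real.log_mul (by positivity) (by positivity),
    ← Real.log_pow]
  refine Real.log_le_log (Finset.prod_pos pos) ?_
  simpa only [Nat.cast_prod, Nat.cast_pow, Nat.cast_mul] using
    Nat.cast_le (α := ℝ).mpr (hS (K * j) (mul_ne_zero hK hj) Q hQ sub_one_dvd)

theorem quotient_gcd_ne_zero {p : ℕ} (hp : p.Prime) : (p - 1) / K.gcd (p - 1) ≠ 0 := by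
  have : 0 < p - 1 := Nat.sub_pos_of_lt hp.one_lt
  exact (Nat.div_pos (Nat.gcd_le_right _ this) (Nat.gcd_pos_of_pos_right _ this)).ne'

theorem sum_log_mul_quotient_rpow_neg_mul_tsum_le (hprime : ∀ p ∈ S, p.Prime)
    (hS : ∀ m ≠ 0, ∀ P : Finset ℕ, ↑P ⊆ S → (∀ p ∈ P, p - 1 ∣ m) → ∏ p ∈ P, p ≤ m ^ R)
    (hK : K ≠ 0) {P : Finset ℕ} (hP : ↑P ⊆ S) {u : ℝ} (hu : 1 < u) :
    (∑ p ∈ P, Real.log p * ((p - 1) / K.gcd (p - 1) : ℕ) ^ (-u)) * ∑' j : ℕ, (j : ℝ) ^ (-u) ≤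
      R * (Real.log K * ∑' j : ℕ, (j : ℝ) ^ (-u) + ∑' j : ℕ, (j : ℝ) ^ (-u) * Real.log j) := by
  have hasSum_left : HasSum
      (fun j : ℕ ↦ ∑ p ∈ P, Real.log p * if (p - 1) / K.gcd (p - 1) ∣ j then (j : ℝ) ^ (-u) else 0)
      (∑ p ∈ P, Real.log p *
        (((p - 1) / K.gcd (p - 1) : ℕ) ^ (-u) * ∑' j : ℕ, (j : ℝ) ^ (-u))) :=
    hasSum_sum fun p hp ↦
      (hasSum_ite_dvd_rpow_neg (quotient_gcd_ne_zero (hprime p (hP hp))) hu).mul_left _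
  have hasSum_right : HasSum
      (fun j : ℕ ↦ R * (Real.log K * (j : ℝ) ^ (-u) + (j : ℝ) ^ (-u) * Real.log j))
      (R * (Real.log K * ∑' j : ℕ, (j : ℝ) ^ (-u) + ∑' j : ℕ, (j : ℝ) ^ (-u) * Real.log j)) :=
    (((Real.summable_nat_rpow.mpr (by linarith)).hasSum.mul_left _).add
      (summable_rpow_neg_mul_log hu).hasSum).mul_left _
  simp_rw [Finset.sum_mul, mul_assoc]
  refine hasSum_le (fun j ↦ ?_) hasSum_left hasSum_right
  rcases eq_or_ne j 0 with rfl | hj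
  · simp [Real.zero_rpow (by linarith : -u ≠ 0)]
  calc ∑ p ∈ P, Real.log p * (if (p - 1) / K.gcd (p - 1) ∣ j then (j : ℝ) ^ (-u) else 0)
      = (∑ p ∈ P with (p - 1) / K.gcd (p - 1) ∣ j, Real.log p) * (j : ℝ) ^ (-u) := by
        simp_rw [mul_ite, mul_zero]
        rw [← Finset.sum_filter, Finset.sum_mul]
    _ ≤ R * (Real.log K + Real.log j) * (j : ℝ) ^ (-u) := by
        gcongr
        exact sum_log_le_of_quotient_dvd hprime hS hK hP hj
    _ = _ := by ring

theorem eventually_sum_log_mul_quotient_rpow_neg_le (hprime : ∀ p ∈ S, p.Prime)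
    (hS : ∀ m ≠ 0, ∀ P : Finset ℕ, ↑P ⊆ S → (∀ p ∈ P, p - 1 ∣ m) → ∏ p ∈ P, p ≤ m ^ R)
    (hK : K ≠ 0) :
    ∀ᶠ u : ℝ in 𝓝[>] 1, ∀ P : Finset ℕ, ↑P ⊆ S →
      ∑ p ∈ P, Real.log p * ((p - 1) / K.gcd (p - 1) : ℕ) ^ (-u) ≤
        R * Real.log K + 16 * R / (u - 1) := by
  filter_upwards [eventually_tsum_rpow_neg_mul_log_le, self_mem_nhdsWithin]
    with u hlog (hu : 1 < u) P hP
  have summable : Summable fun j : ℕ ↦ (j : ℝ) ^ (-u) := Real.summable_nat_rpow.mpr (by linarith)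
  have ζ_pos : 0 < ∑' j : ℕ, (j : ℝ) ^ (-u) :=
    summable.tsum_pos (fun j ↦ by positivity) 1 (by simp)
  refine le_of_mul_le_mul_right ?_ ζ_pos
  calc _ ≤ R * (Real.log K * ∑' j : ℕ, (j : ℝ) ^ (-u) + ∑' j : ℕ, (j : ℝ) ^ (-u) * Real.log j) :=
        sum_log_mul_quotient_rpow_neg_mul_tsum_le hprime hS hK hP hu
    _ ≤ R * (Real.log K * ∑' j : ℕ, (j : ℝ) ^ (-u) + 16 / (u - 1) * ∑' j : ℕ, (j : ℝ) ^ (-u)) := by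
        gcongr
    _ = _ := by ring

theorem gcd_mul_rpow_neg_le {p : ℕ} (hp : p.Prime) {s : ℝ} (hs : 1 ≤ s) :
    (K.gcd (p - 1) : ℝ) * (p : ℝ) ^ (-s) ≤ ((p - 1) / K.gcd (p - 1) : ℕ) ^ (-s) := by
  set g := K.gcd (p - 1)
  have hg : 0 < g := Nat.gcd_pos_of_pos_right _ (Nat.sub_pos_of_lt hp.one_lt)
  have one_le_g : (1 : ℝ) ≤ g := by exact_mod_cast hg
  have x_pos : (0 : ℝ) < ((p - 1) / g : ℕ) := by
    exact_mod_cast Nat.pos_of_ne_zero (quotient_gcd_ne_zero hp)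
  have g_mul_x_le : (g * ((p - 1) / g : ℕ) : ℝ) ≤ p := by
    exact_mod_cast (Nat.mul_div_le (p - 1) g).trans (Nat.sub_le p 1)
  calc (g : ℝ) * (p : ℝ) ^ (-s) ≤ (g : ℝ) ^ s * (g * ((p - 1) / g : ℕ) : ℝ) ^ (-s) := by
        gcongr ?_ * ?_
        · exact Real.self_le_rpow_of_one_le one_le_g hs
        · exact Real.rpow_le_rpow_of_nonpos (by positivity) g_mul_x_le (by linarith)
    _ = ((p - 1) / g : ℕ) ^ (-s) := by
        rw [Real.mul_rpow (by positivity) x_pos.le, ← mul_assoc, ← Real.rpow_add (by positivity),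
          add_neg_cancel, Real.rpow_zero, one_mul]

theorem exists_sum_quotient_rpow_neg_le (hprime : ∀ p ∈ S, p.Prime)
    (hS : ∀ m ≠ 0, ∀ P : Finset ℕ, ↑P ⊆ S → (∀ p ∈ P, p - 1 ∣ m) → ∏ p ∈ P, p ≤ m ^ R)
    (hK : K ≠ 0) :
    ∃ C : ℝ, ∀ᶠ s : ℝ in 𝓝[>] 1, ∀ P : Finset ℕ, ↑P ⊆ S →
      ∑ p ∈ P, (((p - 1) / K.gcd (p - 1) : ℕ) : ℝ) ^ (-s) ≤
        16 * R * Real.log (1 / (s - 1)) + C := by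
  obtain ⟨t, ht : 1 < t, hlog⟩ := mem_nhdsGT_iff_exists_Ioc_subset.mp
    (eventually_sum_log_mul_quotient_rpow_neg_le hprime hS hK)
  refine ⟨2 * (R * Real.log K + 16 * R / (t - 1)) + R * Real.log K * (t - 1) +
    16 * R * Real.log (t - 1), ?_⟩
  filter_upwards [Ioc_mem_nhdsGT ht] with s hs P hP
  set x : ℕ → ℝ := fun p ↦ ((p - 1) / K.gcd (p - 1) : ℕ)
  have x_pos : ∀ p ∈ P, 0 < x p := fun p hp ↦
    Nat.cast_pos.mpr (Nat.pos_of_ne_zero (quotient_gcd_ne_zero (hprime p (hP hp))))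
  have x_le (p : ℕ) : x p ≤ p :=
    Nat.cast_le.mpr ((Nat.div_le_self _ _).trans (Nat.sub_le p 1))
  have log_le : ∀ u ∈ Set.Ioc 1 t, ∑ p ∈ P, Real.log (x p) * x p ^ (-u) ≤
      R * Real.log K + 16 * R / (u - 1) := fun u hu ↦ by
    refine (Finset.sum_le_sum fun p hp ↦ ?_).trans (hlog hu P hP)
    have := Real.log_le_log (x_pos p hp) (x_le p)
    gcongr
  have at_t : ∑ p ∈ P, x p ^ (-t) ≤ 2 * (R * Real.log K + 16 * R / (t - 1)) := by
    refine le_trans ?_ (mul_le_mul_of_nonneg_left (hlog ⟨ht, le_rfl⟩ P hP) zero_le_two)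
    rw [Finset.mul_sum]
    refine Finset.sum_le_sum fun p hp ↦ ?_
    have half_le_log : 1 / 2 ≤ Real.log p := by
      have := Real.log_le_log two_pos (by exact_mod_cast (hprime p (hP hp)).two_le : (2 : ℝ) ≤ p)
      linarith [Real.log_two_gt_d9]
    rw [← mul_assoc]
    exact le_mul_of_one_le_left (by positivity) (by linarith)
  have := sum_rpow_neg_le_of_sum_log_mul_rpow_neg_le x_pos log_le hs
  have : R * Real.log K * (t - s) ≤ R * Real.log K * (t - 1) := by gcongr; exact hs.1.le
  rw [one_div, Real.log_inv]
  linarith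

theorem exists_tsum_gcd_mul_rpow_neg_le (hprime : ∀ p ∈ S, p.Prime)
    (hS : ∀ m ≠ 0, ∀ P : Finset ℕ, ↑P ⊆ S → (∀ p ∈ P, p - 1 ∣ m) → ∏ p ∈ P, p ≤ m ^ R)
    (hK : K ≠ 0) :
    ∃ C : ℝ, ∀ᶠ s : ℝ in 𝓝[>] 1,
      ∑' p, S.indicator (fun p : ℕ ↦ (K.gcd (p - 1) : ℝ) * (p : ℝ) ^ (-s)) p ≤
        16 * R * Real.log (1 / (s - 1)) + C := by
  classical
  obtain ⟨C, hC⟩ := exists_sum_quotient_rpow_neg_le hprime hS hK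
  refine ⟨C, ?_⟩
  filter_upwards [hC, self_mem_nhdsWithin] with s hs (hs₁ : 1 < s)
  refine Real.tsum_le_of_sum_le (Set.indicator_nonneg fun _ _ ↦ by positivity) fun P ↦ ?_
  simp_rw [Set.indicator_apply, ← Finset.sum_filter]
  refine (Finset.sum_le_sum fun p hp ↦ ?_).trans
    (hs (P.filter (· ∈ S)) fun p hp ↦ (Finset.mem_filter.mp hp).2)
  exact gcd_mul_rpow_neg_le (hprime p (Finset.mem_filter.mp hp).2) hs₁.le

open NumberField in
theorem exists_pow_lt_prod_degreeOnePrimes (F : Type*) [Field F] [NumberField F] (R : ℕ)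
    (B : Finset ℕ) :
    ∃ m ≠ 0, ∃ P : Finset ℕ, ↑P ⊆ degreeOnePrimes F \ B ∧ (∀ p ∈ P, p - 1 ∣ m) ∧
      m ^ R < ∏ p ∈ P, p := by
  by_contra! hS
  set d := Module.finrank ℚ F
  let K := 2 ^ (32 * d * R)
  have hK : K ≠ 0 := by positivity
  have card_divisors : K.divisors.card = 32 * d * R + 1 := by
    rw [Nat.divisors_prime_pow Nat.prime_two, Finset.card_map, Finset.card_range]
  obtain ⟨C₁, lower⟩ := exists_card_divisors_mul_log_sub_le F hK B
  obtain ⟨C₂, upper⟩ := exists_tsum_gcd_mul_rpow_neg_le (fun p hp ↦ hp.1.1) hS hK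
  have log_tendsto : Tendsto (fun s : ℝ ↦ Real.log (1 / (s - 1))) (𝓝[>] 1) atTop := by
    have sub_tendsto : Tendsto (fun s : ℝ ↦ s - 1) (𝓝[>] 1) (𝓝[>] 0) := by
      have : Tendsto (fun s : ℝ ↦ s - 1) (𝓝 1) (𝓝 0) :=
        Continuous.tendsto' (by fun_prop) 1 0 (sub_self 1)
      refine tendsto_nhdsWithin_iff.mpr ⟨this.mono_left nhdsWithin_le_nhds, ?_⟩
      filter_upwards [self_mem_nhdsWithin] with s (hs : 1 < s) using sub_pos.mpr hs
    simp_rw [one_div]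
    exact Real.tendsto_log_atTop.comp (tendsto_inv_nhdsGT_zero.comp sub_tendsto)
  obtain ⟨s, hs₁, hs₂, hs⟩ :=
    (lower.and (upper.and (log_tendsto.eventually_gt_atTop (C₁ + 2 * d * C₂)))).exists
  rw [card_divisors] at hs₁
  push_cast at hs₁
  have := mul_le_mul_of_nonneg_left hs₂ (by positivity : (0 : ℝ) ≤ 2 * d)
  linarith

end PrimesWithSmoothPredecessor

section FiniteLinearGroups

theorem iSup_iInf_eigenspace_eq_top {K V ι : Type*} [Field K] [IsAlgClosed K] [AddCommGroup V]
    [Module K V] [FiniteDimensional K V] {f : ι → Module.End K V}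
    (hcomm : ∀ i j, Commute (f i) (f j)) (hf : ∀ i, (f i).IsSemisimple) :
    ⨆ χ : ι → K, ⨅ i, (f i).eigenspace (χ i) = ⊤ := by
  simpa only [fun i ↦ (hf i).isFinitelySemisimple.maxGenEigenspace_eq_eigenspace] using
    Module.End.iSup_iInf_maxGenEigenspace_eq_top_of_iSup_maxGenEigenspace_eq_top_of_commute
      f (fun i j _ ↦ hcomm i j) fun i ↦ Module.End.iSup_maxGenEigenspace_eq_top (f i)

theorem isSemisimple_of_isOfFinOrder {K V : Type*} [Field K] [CharZero K] [AddCommGroup V]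
    [Module K V] {f : Module.End K V} (hf : IsOfFinOrder f) : f.IsSemisimple := by
  obtain ⟨N, hN, hpow⟩ := isOfFinOrder_iff_pow_eq_one.mp hf
  refine Module.End.isSemisimple_of_squarefree_aeval_eq_zero
    (p := (Polynomial.X ^ N - 1 : Polynomial K)) ?_ (by simp [hpow])
  exact (Polynomial.X_pow_sub_one_separable_iff.mpr (by exact_mod_cast hN.ne')).squarefree

section Unitary

variable {E : Type*} [NormedAddCommGroup E] [InnerProductSpace ℂ E] [CompleteSpace E]

theorem inner_eq_zero_of_unitary_eigenvectors {A : unitary (E →L[ℂ] E)} {v w : E} {a b : ℂ}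
    (hab : a ≠ b) (hv : (A : E →L[ℂ] E) v = a • v) (hw : (A : E →L[ℂ] E) w = b • w) :
    inner ℂ v w = 0 := by
  by_contra hvw
  have hvv : inner ℂ v v ≠ 0 := fun h ↦ hvw (by simp [inner_self_eq_zero.mp h])
  have ha : (starRingEnd ℂ) a * a = 1 := by
    have := Unitary.inner_map_map A v v
    rw [hv, inner_smul_left, inner_smul_right, ← mul_assoc] at this
    exact (mul_eq_right₀ hvv).mp this
  have hb : (starRingEnd ℂ) a * b = 1 := by
    have := Unitary.inner_map_map A v w
    rw [hv, hw, inner_smul_left, inner_smul_right, ← mul_assoc] at this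
    exact (mul_eq_right₀ hvw).mp this
  exact hab (mul_left_cancel₀ (left_ne_zero_of_mul_eq_one ha) (ha.trans hb.symm))

theorem eq_zero_of_eigenvector_of_eigenvector_conj {A B : unitary (E →L[ℂ] E)}
    (hB : ‖(B : E →L[ℂ] E) - 1‖ < 1) {w : E} {a b : ℂ} (hab : a ≠ b)
    (ha : (A : E →L[ℂ] E) w = a • w) (hb : (↑(B * A * B⁻¹) : E →L[ℂ] E) w = b • w) : w = 0 := by
  set v := (↑B⁻¹ : E →L[ℂ] E) w with hv
  have B_v : (B : E →L[ℂ] E) v = w := by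
    rw [hv, ← mul_apply_eq_comp, ← Submonoid.coe_mul, mul_inv_cancel]
    rfl
  have A_v : (A : E →L[ℂ] E) v = b • v := by
    have A_B_inv : A * B⁻¹ = B⁻¹ * (B * A * B⁻¹) := by group
    rw [hv, ← mul_apply_eq_comp, ← Submonoid.coe_mul, A_B_inv, Submonoid.coe_mul,
      mul_apply_eq_comp, hb, map_smul]
  have orthogonal : inner ℂ w v = 0 := inner_eq_zero_of_unitary_eigenvectors hab ha A_v
  have norm_eq : ‖w‖ = ‖v‖ := B_v ▸ Unitary.norm_map B v
  have norm_sub_le : ‖w - v‖ ≤ ‖w‖ := by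
    have := ((B : E →L[ℂ] E) - 1).le_of_opNorm_le hB.le v
    simpa [B_v, norm_eq] using this
  have pythagoras : ‖w - v‖ * ‖w - v‖ = ‖w‖ * ‖w‖ + ‖v‖ * ‖v‖ := by
    have : inner ℂ w (-v) = 0 := by rw [inner_neg_right, orthogonal, neg_zero]
    simpa [sub_eq_add_neg] using norm_add_sq_eq_norm_sq_add_norm_sq_of_inner_eq_zero _ _ this
  rw [← norm_eq_zero]
  nlinarith [norm_nonneg w, norm_nonneg (w - v)]

theorem commute_of_commute_conj [FiniteDimensional ℂ E] {A B : unitary (E →L[ℂ] E)}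
    (hA : IsOfFinOrder A) (hcomm : Commute A (B * A * B⁻¹)) (hB : ‖(B : E →L[ℂ] E) - 1‖ < 1) :
    Commute A B := by
  let toEnd : unitary (E →L[ℂ] E) →* Module.End ℂ E :=
    (ContinuousLinearMap.toLinearMapRingHom (R₁ := ℂ) (M₁ := E)).toMonoidHom.comp
      (unitary (E →L[ℂ] E)).subtype
  have hA' : IsOfFinOrder (B * A * B⁻¹) := MonoidHom.isOfFinOrder (MulAut.conj B).toMonoidHom hA
  have eigenspaces_span := iSup_iInf_eigenspace_eq_top (f := ![toEnd A, toEnd (B * A * B⁻¹)])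
    (by simp [Fin.forall_fin_two, hcomm.map toEnd, (hcomm.map toEnd).symm, -map_mul])
    (by simp [Fin.forall_fin_two, isSemisimple_of_isOfFinOrder, toEnd.isOfFinOrder hA,
      toEnd.isOfFinOrder hA', -map_mul])
  have le_ker : (⊤ : Submodule ℂ E) ≤ (toEnd (B * A * B⁻¹) - toEnd A).ker := by
    rw [← eigenspaces_span]
    refine iSup_le fun χ w hw ↦ ?_
    obtain ⟨ha : (A : E →L[ℂ] E) w = χ 0 • w, hb : (↑(B * A * B⁻¹) : E →L[ℂ] E) w = χ 1 • w⟩ := by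
      simpa only [Submodule.mem_iInf, Fin.forall_fin_two, Module.End.mem_eigenspace_iff] using hw
    change (↑(B * A * B⁻¹) : E →L[ℂ] E) w - (A : E →L[ℂ] E) w = 0
    rcases eq_or_ne (χ 0) (χ 1) with h | h
    · rw [ha, hb, h, sub_self]
    · simp [eq_zero_of_eigenvector_of_eigenvector_conj hB h ha hb]
  have conj_eq : B * A * B⁻¹ = A := Subtype.ext <| ContinuousLinearMap.coe_injective <|
    sub_eq_zero.mp (LinearMap.ker_eq_top.mp (top_le_iff.mp le_ker))
  exact (mul_inv_eq_iff_eq_mul.mp conj_eq).symm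

theorem norm_coe_unitary_le_one (A : unitary (E →L[ℂ] E)) : ‖(A : E →L[ℂ] E)‖ ≤ 1 :=
  (A : E →L[ℂ] E).opNorm_le_bound zero_le_one fun x ↦ by
    rw [Unitary.norm_map, one_mul]

theorem norm_commutator_unitary_sub_one_le (A B : unitary (E →L[ℂ] E)) :
    ‖(↑(A * B * A⁻¹ * B⁻¹) : E →L[ℂ] E) - 1‖ ≤
      2 * ‖(A : E →L[ℂ] E) - 1‖ * ‖(B : E →L[ℂ] E) - 1‖ := by
  calc _ ≤ 2 * ‖(↑A⁻¹ : E →L[ℂ] E)‖ * ‖(↑B⁻¹ : E →L[ℂ] E)‖ * ‖(A : E →L[ℂ] E) - 1‖ *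
        ‖(B : E →L[ℂ] E) - 1‖ :=
        norm_commutator_units_sub_one_le (Unitary.toUnits A) (Unitary.toUnits B)
    _ ≤ 2 * 1 * 1 * ‖(A : E →L[ℂ] E) - 1‖ * ‖(B : E →L[ℂ] E) - 1‖ := by
        gcongr <;> exact norm_coe_unitary_le_one _
    _ = _ := by ring

theorem commute_of_norm_sub_one_lt [FiniteDimensional ℂ E] {G : Subgroup (unitary (E →L[ℂ] E))}
    [Finite G] {A B : unitary (E →L[ℂ] E)} (hAG : A ∈ G) (hBG : B ∈ G)
    (hA : ‖(A : E →L[ℂ] E) - 1‖ < 1 / 2) (hB : ‖(B : E →L[ℂ] E) - 1‖ < 1 / 2) : Commute A B := by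
  by_contra hAB
  -- Among the elements near `1` that do not commute with `A`, take `C` closest to `1`; the
  -- commutator of `A` and `C` is closer still, so it commutes with `A`.
  let S : Set (unitary (E →L[ℂ] E)) :=
    {C | C ∈ G ∧ ‖(C : E →L[ℂ] E) - 1‖ < 1 / 2 ∧ ¬ Commute A C}
  obtain ⟨C, ⟨hCG, hC, hAC⟩, minimal⟩ := Set.exists_min_image S (fun C ↦ ‖(C : E →L[ℂ] E) - 1‖)
    ((Set.toFinite (G : Set _)).subset fun _ h ↦ h.1) ⟨B, hBG, hB, hAB⟩
  have C_ne_one : (C : E →L[ℂ] E) ≠ 1 := fun h ↦ by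
    rw [show C = 1 from Subtype.ext h] at hAC
    exact hAC (Commute.one_right A)
  have commutator_lt : ‖(↑(A * C * A⁻¹ * C⁻¹) : E →L[ℂ] E) - 1‖ < ‖(C : E →L[ℂ] E) - 1‖ := by
    have : 0 < ‖(C : E →L[ℂ] E) - 1‖ := norm_pos_iff.mpr (sub_ne_zero.mpr C_ne_one)
    nlinarith [norm_commutator_unitary_sub_one_le A C]
  have commute_commutator : Commute A (A * C * A⁻¹ * C⁻¹) := by
    by_contra h
    have mem_G : A * C * A⁻¹ * C⁻¹ ∈ G :=
      G.mul_mem (G.mul_mem (G.mul_mem hAG hCG) (G.inv_mem hAG)) (G.inv_mem hCG)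
    exact (minimal _ ⟨mem_G, commutator_lt.trans hC, h⟩).not_gt commutator_lt
  have commute_conj : Commute A (C * A * C⁻¹) := by
    rw [show C * A * C⁻¹ = (A * C * A⁻¹ * C⁻¹)⁻¹ * A by group]
    exact commute_commutator.inv_right.mul_right (Commute.refl A)
  have finite_order : IsOfFinOrder A := Submonoid.isOfFinOrder_coe.mpr
    (isOfFinOrder_of_finite (⟨A, hAG⟩ : G))
  exact hAC (commute_of_commute_conj finite_order commute_conj (hC.trans (by norm_num)))

variable (E) in
theorem exists_forall_index_le_of_finite_unitary [FiniteDimensional ℂ E] :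
    ∃ J : ℕ, ∀ (G : Subgroup (unitary (E →L[ℂ] E))) [Finite G],
      ∃ B : Subgroup G, IsMulCommutative B ∧ B.index ≤ J := by
  have : ProperSpace (E →L[ℂ] E) := FiniteDimensional.proper ℂ _
  obtain ⟨t, -, t_finite, cover⟩ := (isCompact_closedBall (0 : E →L[ℂ] E) 1).finite_cover_balls
    (show (0 : ℝ) < 1 / 4 by norm_num)
  have := t_finite.to_subtype
  refine ⟨Nat.card t, fun G _ ↦ ?_⟩
  let B := Subgroup.closure {g : G | ‖((g : unitary (E →L[ℂ] E)) : E →L[ℂ] E) - 1‖ < 1 / 2}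
  refine ⟨B, Subgroup.isMulCommutative_closure fun x hx y hy ↦
    Subtype.ext (commute_of_norm_sub_one_lt x.2 y.2 hx hy), ?_⟩
  have exists_center (g : G) : ∃ z : t, ‖((g : unitary (E →L[ℂ] E)) : E →L[ℂ] E) - z‖ < 1 / 4 := by
    obtain ⟨z, hz, hg⟩ := Set.mem_iUnion₂.mp
      (cover (mem_closedBall_zero_iff.mpr (norm_coe_unitary_le_one g)))
    exact ⟨⟨z, hz⟩, mem_ball_iff_norm.mp hg⟩
  choose center hcenter using exists_center
  refine Nat.card_le_card_of_injective (fun q : G ⧸ B ↦ center q.out) fun q r hqr ↦ ?_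
  rw [← q.out_eq, ← r.out_eq, QuotientGroup.eq]
  refine Subgroup.subset_closure ?_
  change ‖(↑(q.out⁻¹ * r.out : G) : unitary (E →L[ℂ] E)).1 - 1‖ < 1 / 2
  rw [← CStarRing.norm_coe_unitary_mul (q.out : unitary (E →L[ℂ] E)), mul_sub, ← Submonoid.coe_mul,
    ← Subgroup.coe_mul, mul_inv_cancel_left, mul_one]
  have hq := hcenter q.out
  rw [norm_sub_rev, show center q.out = center r.out from hqr] at hq
  linarith [hcenter r.out, norm_sub_le_norm_sub_add_norm_sub
    (r.out : unitary (E →L[ℂ] E)).1 (center r.out : E →L[ℂ] E) (q.out : unitary (E →L[ℂ] E)).1]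

end Unitary

variable {n : Type*} [Fintype n] [DecidableEq n]

open scoped MatrixOrder ComplexOrder in
theorem exists_conj_mem_unitaryGroup {G : Type*} [Group G] [Finite G] (ρ : G →* GL n ℂ) :
    ∃ B : GL n ℂ, ∀ g, (↑(B * ρ g * B⁻¹) : Matrix n n ℂ) ∈ unitaryGroup n ℂ := by
  have := Fintype.ofFinite G
  set P : Matrix n n ℂ := ∑ g, star (ρ g : Matrix n n ℂ) * ρ g with P_def
  have posDef : P.PosDef := by
    classical
    rw [P_def, ← Finset.add_sum_erase _ _ (Finset.mem_univ 1)]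
    refine .add_posSemidef (by simpa using PosDef.one) ?_
    exact posSemidef_sum _ fun g _ ↦ posSemidef_conjTranspose_mul_self _
  obtain ⟨B, hB⟩ := CStarAlgebra.nonneg_iff_eq_star_mul_self.mp
    (nonneg_iff_posSemidef.mpr posDef.posSemidef)
  have isUnit_B : IsUnit B := by
    have := posDef.isUnit
    rw [isUnit_iff_isUnit_det, hB, det_mul] at this
    exact (isUnit_iff_isUnit_det B).mpr (isUnit_of_mul_isUnit_right this)
  obtain ⟨B, rfl⟩ := isUnit_B
  have invariant (g : G) : star (ρ g : Matrix n n ℂ) * P * ρ g = P := by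
    conv_rhs => rw [P_def, ← Equiv.sum_comp (Equiv.mulRight g)]
    simp only [P_def, Finset.mul_sum, Finset.sum_mul, Equiv.coe_mulRight, map_mul, Units.val_mul,
      star_mul, mul_assoc]
  refine ⟨B, fun g ↦ mem_unitaryGroup_iff'.mpr ?_⟩
  calc star (↑(B * ρ g * B⁻¹) : Matrix n n ℂ) * ↑(B * ρ g * B⁻¹)
      = star (↑B⁻¹ : Matrix n n ℂ) * (star (ρ g : Matrix n n ℂ) * (star ↑B * ↑B) * ρ g) * ↑B⁻¹ := by
        simp only [Units.val_mul, star_mul, mul_assoc]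
    _ = star (↑B * ↑B⁻¹ : Matrix n n ℂ) * (↑B * ↑B⁻¹) := by
        rw [← hB, invariant, hB]
        simp only [star_mul, mul_assoc]
    _ = 1 := by simp

theorem exists_injective_unitaryGroup_hom :
    ∃ T : unitaryGroup n ℂ →* unitary (EuclideanSpace ℂ n →L[ℂ] EuclideanSpace ℂ n),
      Function.Injective T := by
  let T : Matrix n n ℂ →⋆* (EuclideanSpace ℂ n →L[ℂ] EuclideanSpace ℂ n) :=
    { toMonoidHom := toEuclideanCLM (n := n) (𝕜 := ℂ), map_star' := map_star toEuclideanCLM }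
  exact ⟨(Unitary.map T).toMonoidHom, Unitary.map_injective toEuclideanCLM.injective⟩

variable (n) in
theorem exists_forall_index_le_of_finite_complex :
    ∃ J : ℕ, ∀ (G : Type*) [Group G] [Finite G] (ρ : G →* GL n ℂ), Function.Injective ρ →
      ∃ B : Subgroup G, IsMulCommutative B ∧ B.index ≤ J := by
  obtain ⟨J, hJ⟩ := exists_forall_index_le_of_finite_unitary (EuclideanSpace ℂ n)
  refine ⟨J, fun G _ _ ρ hρ ↦ ?_⟩
  obtain ⟨Q, hQ⟩ := exists_conj_mem_unitaryGroup ρ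
  let conjQ : G →* unitaryGroup n ℂ :=
    (((Units.coeHom _).comp (MulAut.conj Q).toMonoidHom).comp ρ).codRestrict _ hQ
  have conjQ_injective : Function.Injective conjQ := fun g h hgh ↦
    hρ ((MulAut.conj Q).injective (Units.ext (congrArg Subtype.val hgh)))
  obtain ⟨T, T_injective⟩ := exists_injective_unitaryGroup_hom (n := n)
  set U := T.comp conjQ
  have U_injective : Function.Injective U := T_injective.comp conjQ_injective
  have : Finite U.range := Finite.of_surjective _ U.rangeRestrict_surjective
  obtain ⟨B, hB, hBJ⟩ := hJ U.range
  refine ⟨B.comap U.rangeRestrict, ?_, ?_⟩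
  · exact B.comap_injective_isMulCommutative (U.rangeRestrict_injective_iff.mpr U_injective)
  · rwa [Subgroup.index_comap_of_surjective _ U.rangeRestrict_surjective]

end FiniteLinearGroups

section FinitelyGeneratedRings

variable {n : Type*} [Fintype n] [DecidableEq n]

theorem generalLinearGroup_map_injective {A B : Type*} [CommRing A] [CommRing B] {f : A →+* B}
    (hf : Function.Injective f) : Function.Injective (GeneralLinearGroup.map (n := n) f) :=
  Units.map_injective (Matrix.map_injective hf)

theorem generalLinearGroup_map_sub_one_apply {A B : Type*} [CommRing A] [CommRing B] (f : A →+* B)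
    (g : GL n A) (i j : n) : (GeneralLinearGroup.map f g - 1 : Matrix n n B) i j =
      f ((g - 1 : Matrix n n A) i j) := by
  simp [Matrix.one_apply, apply_ite f]

theorem generalLinearGroup_map_ne_one {A B : Type*} [CommRing A] [CommRing B] [Nontrivial B]
    (f : A →+* B) {g : GL n A} {i j : n} (hg : IsUnit ((g - 1 : Matrix n n A) i j)) :
    GeneralLinearGroup.map f g ≠ 1 := by
  intro h
  have hzero := generalLinearGroup_map_sub_one_apply f g i j
  rw [h, Units.val_one, sub_self, Matrix.zero_apply] at hzero
  exact not_isUnit_zero (hzero ▸ hg.map f)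

theorem mem_range_generalLinearGroup_map {A B : Type*} [CommRing A] [CommRing B] {f : A →+* B}
    (hf : Function.Injective f) {g : GL n B} (hg : ∀ i j, (g : Matrix n n B) i j ∈ f.range)
    (hg' : ∀ i j, ((g⁻¹ : GL n B) : Matrix n n B) i j ∈ f.range) :
    g ∈ (GeneralLinearGroup.map (n := n) f).range := by
  choose a ha using hg
  choose b hb using hg'
  have ha' : f.mapMatrix (of a) = (g : Matrix n n B) := Matrix.ext ha
  have hb' : f.mapMatrix (of b) = ((g⁻¹ : GL n B) : Matrix n n B) := Matrix.ext hb
  have hinj : Function.Injective f.mapMatrix := Matrix.map_injective (m := n) (n := n) hf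
  refine ⟨⟨of a, of b, hinj ?_, hinj ?_⟩, Units.ext ha'⟩
  · rw [map_mul, ha', hb', Units.mul_inv, map_one]
  · rw [map_mul, ha', hb', Units.inv_mul, map_one]

theorem exists_fg_subalgebra_mem_range {A : Type*} [CommRing A] {S : Set (GL n A)} (hS : S.Finite)
    {T : Set A} (hT : T.Finite) : ∃ R : Subalgebra ℤ A, R.FG ∧ T ⊆ R ∧
      S ⊆ (GeneralLinearGroup.map (n := n) (R.val : R →+* A)).range := by
  let E : Set A := ⋃ g ∈ S, Set.range (fun ij : n × n ↦ (g : Matrix n n A) ij.1 ij.2) ∪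
    Set.range (fun ij : n × n ↦ ((g⁻¹ : GL n A) : Matrix n n A) ij.1 ij.2)
  have hE : E.Finite := hS.biUnion fun g _ ↦ (Set.finite_range _).union (Set.finite_range _)
  let R : Subalgebra ℤ A := Algebra.adjoin ℤ (T ∪ E)
  refine ⟨R, Subalgebra.fg_def.mpr ⟨_, hT.union hE, rfl⟩,
    Set.subset_union_left.trans Algebra.subset_adjoin, fun g hg ↦ ?_⟩
  have hmem (x : A) (hx : x ∈ E) : x ∈ (R.val : R →+* A).range :=
    ⟨⟨x, Algebra.subset_adjoin (Or.inr hx)⟩, rfl⟩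
  exact mem_range_generalLinearGroup_map Subtype.val_injective
    (fun i j ↦ hmem _ (Set.mem_biUnion hg (Or.inl ⟨(i, j), rfl⟩)))
    (fun i j ↦ hmem _ (Set.mem_biUnion hg (Or.inr ⟨(i, j), rfl⟩)))

theorem exists_fg_subalgebra_lift {A G : Type*} [CommRing A] [Group G] [Group.FG G]
    (ρ : G →* GL n A) {S : Set (GL n A)} (hS : S.Finite) {W : Set G} (hW : W.Finite) :
    ∃ R : Subalgebra ℤ A, R.FG ∧ S ⊆ (GeneralLinearGroup.map (n := n) (R.val : R →+* A)).range ∧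
      ∃ ρ' : G →* GL n R, (∀ g, GeneralLinearGroup.map (R.val : R →+* A) (ρ' g) = ρ g) ∧
        ∀ g ∈ W, ∀ i j, IsUnit ((ρ g - 1 : Matrix n n A) i j) →
          IsUnit ((ρ' g - 1 : Matrix n n R) i j) := by
  obtain ⟨X, hX⟩ := Group.fg_def.mp ‹Group.FG G›
  let inverses : Set A :=
    ⋃ g ∈ W, Set.range fun ij : n × n ↦ Ring.inverse ((ρ g - 1 : Matrix n n A) ij.1 ij.2)
  obtain ⟨R, hR, hinv, hSR⟩ := exists_fg_subalgebra_mem_range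
    (hS.union (X.finite_toSet.image ρ)) (hW.biUnion fun g _ ↦ Set.finite_range _ :
      inverses.Finite)
  let ι : R →+* A := R.val
  have hι : Function.Injective (GeneralLinearGroup.map (n := n) ι) :=
    generalLinearGroup_map_injective Subtype.val_injective
  have hρ (g : G) : ρ g ∈ (GeneralLinearGroup.map (n := n) ι).range := by
    have hle : Subgroup.closure (X : Set G) ≤ (GeneralLinearGroup.map (n := n) ι).range.comap ρ :=
      (Subgroup.closure_le _).mpr fun x hx ↦ hSR (Or.inr ⟨x, hx, rfl⟩)
    exact hle (hX ▸ Subgroup.mem_top g)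
  let e := MonoidHom.ofInjective hι
  let ρ' : G →* GL n R := e.symm.toMonoidHom.comp (ρ.codRestrict _ hρ)
  have hρ' (g : G) : GeneralLinearGroup.map ι (ρ' g) = ρ g :=
    congrArg Subtype.val (e.apply_symm_apply ⟨ρ g, hρ g⟩)
  refine ⟨R, hR, Set.subset_union_left.trans hSR, ρ', hρ', fun g hg i j hu ↦ ?_⟩
  refine IsUnit.of_mul_eq_one ⟨_, hinv (Set.mem_biUnion hg ⟨(i, j), rfl⟩)⟩ (Subtype.ext ?_)
  change ι ((ρ' g - 1 : Matrix n n R) i j) * _ = 1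
  rw [← generalLinearGroup_map_sub_one_apply, hρ', Ring.mul_inverse_cancel _ hu]

theorem exists_ringHom_numberField_of_finiteType_rat.{u} (A : Type u) [CommRing A] [Nontrivial A]
    [Algebra ℚ A] [Algebra.FiniteType ℚ A] :
    ∃ (F : Type u) (_ : Field F) (_ : NumberField F), Nonempty (A →+* F) := by
  obtain ⟨M, hM⟩ := Ideal.exists_maximal A
  have hft : Algebra.FiniteType ℚ (A ⧸ M) :=
    Algebra.FiniteType.of_surjective (Ideal.Quotient.mkₐ ℚ M) Ideal.Quotient.mk_surjective
  let _ : Field (A ⧸ M) := Ideal.Quotient.field M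
  have : CharZero (A ⧸ M) := algebraRat.charZero (A ⧸ M)
  have hfin : @Module.Finite ℚ (A ⧸ M) _ _ (Ideal.Quotient.algebra ℚ).toModule :=
    @finite_of_finite_type_of_isJacobsonRing ℚ (A ⧸ M) _ _ (Ideal.Quotient.algebra ℚ) _ hft
  have halg : (Ideal.Quotient.algebra ℚ : Algebra ℚ (A ⧸ M)) = DivisionRing.toRatAlgebra :=
    Subsingleton.elim _ _
  exact ⟨A ⧸ M, _, { to_charZero := ‹_›, to_finiteDimensional := halg ▸ hfin },
    ⟨Ideal.Quotient.mk M⟩⟩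

open scoped TensorProduct in
theorem exists_ringHom_numberField.{u} (R : Type u) [CommRing R] [CharZero R]
    [Algebra.FiniteType ℤ R] :
    ∃ (F : Type u) (_ : Field F) (_ : NumberField F), Nonempty (R →+* F) := by
  have : Nontrivial (ℚ ⊗[ℤ] R) :=
    Algebra.TensorProduct.nontrivial_of_algebraMap_injective_of_flat_left ℤ ℚ R
      (RingHom.injective_int (algebraMap ℤ R))
  obtain ⟨F, hF, hF', ⟨f⟩⟩ := exists_ringHom_numberField_of_finiteType_rat (ℚ ⊗[ℤ] R)
  exact ⟨F, hF, hF', ⟨f.comp Algebra.TensorProduct.includeRight.toRingHom⟩⟩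

end FinitelyGeneratedRings

section ReductionModuloPrimes

theorem exists_comp_eq_id_of_coprime {G Q : Type*} [Group G] [Group Q] {f : G →* Q}
    (hf : Function.Surjective f) (hcop : (Nat.card f.ker).Coprime (Nat.card Q)) :
    ∃ s : Q →* G, f.comp s = MonoidHom.id Q := by
  have hindex : f.ker.index = Nat.card Q := by
    rw [Subgroup.index_ker, MonoidHom.range_eq_top.mpr hf, Subgroup.card_top]
  obtain ⟨K, hK⟩ := Subgroup.exists_right_complement'_of_coprime (hindex ▸ hcop)
  let e : Q ≃* K :=
    (QuotientGroup.quotientKerEquivOfSurjective f hf).symm.trans hK.symm.QuotientMulEquiv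
  exact ⟨K.subtype.comp e.toMonoidHom, MonoidHom.ext fun q ↦ e.symm_apply_apply q⟩

theorem exists_lift_subgroup_of_coprime {G Q : Type*} [Group G] [Group Q] {f : G →* Q}
    (hf : Function.Surjective f) (H : Subgroup Q) (hcop : (Nat.card f.ker).Coprime (Nat.card H)) :
    ∃ s : H →* G, ∀ h, f (s h) = h := by
  let kerHom : (f.subgroupComap H).ker →* f.ker :=
    ((H.comap f).subtype.comp (Subgroup.subtype _)).codRestrict f.ker
      fun x ↦ congrArg Subtype.val x.2
  have hker : Function.Injective kerHom :=
    fun x y hxy ↦ Subtype.ext (Subtype.ext (congrArg (Subtype.val : f.ker → G) hxy))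
  obtain ⟨s, hs⟩ := exists_comp_eq_id_of_coprime
    (f.subgroupComap_surjective_of_surjective H hf)
    (hcop.coprime_dvd_left (Subgroup.card_dvd_of_injective kerHom hker))
  exact ⟨(H.comap f).subtype.comp s, fun h ↦ congrArg Subtype.val (DFunLike.congr_fun hs h)⟩

theorem card_ker_unitsMap_dvd {R S : Type*} [Ring R] [Ring S] (f : R →+* S) [IsLocalHom f] :
    Nat.card (Units.map (f : R →* S)).ker ∣ Nat.card R := by
  let subOne (u : (Units.map (f : R →* S)).ker) : f.toAddMonoidHom.ker :=
    ⟨(u : Rˣ) - 1, by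
      have hu : f (u : Rˣ) = 1 := congrArg Units.val u.2
      simp [AddMonoidHom.mem_ker, hu]⟩
  have hbij : Function.Bijective subOne := by
    refine ⟨fun u v huv ↦ Subtype.ext (Units.ext (sub_left_injective (congrArg Subtype.val huv))),
      fun x ↦ ?_⟩
    have hx : f (1 + x) = 1 := by
      rw [map_add, map_one, show f (x : R) = 0 from x.2, add_zero]
    have hunit : IsUnit (1 + x : R) := isUnit_of_map_unit f _ (hx ▸ isUnit_one)
    exact ⟨⟨hunit.unit, Units.ext hx⟩, Subtype.ext (add_sub_cancel_left 1 (x : R))⟩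
  rw [Nat.card_congr (Equiv.ofBijective subOne hbij)]
  exact AddSubgroup.card_addSubgroup_dvd_card _

variable {n : Type*} [Fintype n] [DecidableEq n]

theorem isLocalHom_mapMatrix {A B : Type*} [CommRing A] [CommRing B] (f : A →+* B)
    [IsLocalHom f] : IsLocalHom (f.mapMatrix : Matrix n n A →+* Matrix n n B) := by
  refine ⟨fun M hM ↦ ?_⟩
  rw [Matrix.isUnit_iff_isUnit_det, ← RingHom.map_det] at hM
  exact M.isUnit_iff_isUnit_det.mpr (isUnit_of_map_unit f _ hM)

theorem exists_lift_generalLinearGroup {A B : Type*} [CommRing A] [CommRing B] {f : A →+* B}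
    [IsLocalHom f] (hf : Function.Surjective f) (H : Subgroup (GL n B))
    (hcop : (Nat.card A).Coprime (Nat.card H)) :
    ∃ s : H →* GL n A, ∀ h, GeneralLinearGroup.map f (s h) = h := by
  have := isLocalHom_mapMatrix (n := n) f
  have hmatrix : Function.Surjective (f.mapMatrix : Matrix n n A →+* Matrix n n B) := by
    intro M
    choose a ha using fun i j ↦ hf (M i j)
    exact ⟨of a, Matrix.ext ha⟩
  have hsurj : Function.Surjective (GeneralLinearGroup.map (n := n) f) :=
    IsLocalRing.surjective_units_map_of_local_ringHom
      (f.mapMatrix : Matrix n n A →+* Matrix n n B) hmatrix this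
  refine exists_lift_subgroup_of_coprime hsurj H (Nat.Coprime.coprime_dvd_left
    (card_ker_unitsMap_dvd (f.mapMatrix : Matrix n n A →+* Matrix n n B)) ?_)
  change (Nat.card (n → n → A)).Coprime _
  simp only [Nat.card_fun]
  exact (hcop.pow_left _).pow_left _

theorem exists_monoidHom_generalLinearGroup_pi {H ι : Type*} [Group H] {A : ι → Type*}
    [∀ i, CommRing (A i)] (s : ∀ i, H →* GL n (A i)) :
    ∃ s' : H →* GL n (∀ i, A i),
      ∀ i h, GeneralLinearGroup.map (Pi.evalRingHom A i) (s' h) = s i h := by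
  let toMatrix : H →* Matrix n n (∀ i, A i) :=
    { toFun h := of fun a b i ↦ (s i h : Matrix n n (A i)) a b
      map_one' := by
        ext a b i
        simp [Matrix.one_apply, apply_ite (· i : (∀ i, A i) → A i)]
      map_mul' x y := by
        ext a b i
        simp [Matrix.mul_apply] }
  exact ⟨toMatrix.toHomUnits, fun i h ↦ Units.ext rfl⟩

theorem exists_injective_generalLinearGroup_complex {A H : Type*} [CommRing A] [CharZero A]
    [Group H] [Finite H] (s : H →* GL n A)
    (hs : ∀ h ≠ 1, ∃ i j, IsUnit ((s h - 1 : Matrix n n A) i j)) :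
    ∃ ρ : H →* GL n ℂ, Function.Injective ρ := by
  obtain ⟨R, hR, -, s', -, hs'⟩ := exists_fg_subalgebra_lift s Set.finite_empty (Set.toFinite .univ)
  have : Algebra.FiniteType ℤ R := R.fg_iff_finiteType.mp hR
  obtain ⟨F, _, _, ⟨φ⟩⟩ := exists_ringHom_numberField R
  let ε : F →+* ℂ := Classical.arbitrary _
  refine ⟨(GeneralLinearGroup.map (ε.comp φ)).comp s', (injective_iff_map_eq_one _).mpr ?_⟩
  intro h hh
  by_contra hne
  obtain ⟨i, j, hij⟩ := hs h hne
  exact generalLinearGroup_map_ne_one _ (hs' h trivial i j hij) hh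

instance isLocalHom_castHom_zmod_pow (p m : ℕ) :
    IsLocalHom (ZMod.castHom (dvd_pow_self p m.succ_ne_zero) (ZMod p)) := by
  refine ⟨fun a ha ↦ ?_⟩
  obtain ⟨k, rfl⟩ := ZMod.intCast_surjective a
  rw [map_intCast, ZMod.coe_int_isUnit_iff_isCoprime] at ha
  exact (ZMod.coe_int_isUnit_iff_isCoprime _ _).mpr (by exact_mod_cast ha.pow_left)

theorem charZero_pi_zmod_pow {p : ℕ} (hp : 1 < p) : CharZero (∀ m : ℕ, ZMod (p ^ (m + 1))) := by
  refine charZero_of_inj_zero fun k hk ↦ ?_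
  have hdvd : p ^ (k + 1) ∣ k := (ZMod.natCast_eq_zero_iff _ _).mp (congrFun hk k)
  exact Nat.eq_zero_of_dvd_of_lt hdvd ((Nat.lt_pow_self hp).trans (Nat.pow_lt_pow_succ hp))

theorem exists_injective_complex_of_not_dvd_card {p : ℕ} (hp : p.Prime)
    (H : Subgroup (GL n (ZMod p))) (hH : ¬ p ∣ Nat.card H) :
    ∃ ρ : H →* GL n ℂ, Function.Injective ρ := by
  have : Fact p.Prime := ⟨hp⟩
  -- The product of the rings `ZMod (p ^ (m + 1))` stands in for the `p`-adic integers.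
  have := charZero_pi_zmod_pow hp.one_lt
  let red (m : ℕ) : ZMod (p ^ (m + 1)) →+* ZMod p :=
    ZMod.castHom (dvd_pow_self p m.succ_ne_zero) (ZMod p)
  have hlift (m : ℕ) : ∃ s : H →* GL n (ZMod (p ^ (m + 1))),
      ∀ h, GeneralLinearGroup.map (red m) (s h) = h := by
    refine exists_lift_generalLinearGroup (ZMod.ringHom_surjective _) H ?_
    rw [Nat.card_zmod]
    exact (hp.coprime_iff_not_dvd.mpr hH).pow_left _
  choose s hs using hlift
  obtain ⟨s', hs'⟩ := exists_monoidHom_generalLinearGroup_pi s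
  refine exists_injective_generalLinearGroup_complex s' fun h hne ↦ ?_
  obtain ⟨i, j, hij⟩ : ∃ i j, ((h : GL n (ZMod p)) - 1 : Matrix n n (ZMod p)) i j ≠ 0 := by
    by_contra! hzero
    exact hne (Subtype.ext (Units.ext (sub_eq_zero.mp (Matrix.ext hzero))))
  refine ⟨i, j, Pi.isUnit_iff.mpr fun m ↦ ?_⟩
  let ev : (∀ m, ZMod (p ^ (m + 1))) →+* ZMod (p ^ (m + 1)) := Pi.evalRingHom _ m
  have hred : red m (ev ((s' h - 1 : Matrix n n (∀ m, ZMod (p ^ (m + 1)))) i j)) =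
      ((h : GL n (ZMod p)) - 1 : Matrix n n (ZMod p)) i j := by
    rw [← generalLinearGroup_map_sub_one_apply ev, hs', ← generalLinearGroup_map_sub_one_apply, hs]
  exact isUnit_of_map_unit (red m) (ev _) (hred ▸ hij.isUnit)

theorem exists_forall_index_le_of_not_dvd_card (n : Type*) [Fintype n] [DecidableEq n] :
    ∃ J : ℕ, ∀ p : ℕ, p.Prime → ∀ H : Subgroup (GL n (ZMod p)), ¬ p ∣ Nat.card H →
      ∃ B : Subgroup H, IsMulCommutative B ∧ B.index ≤ J := by
  obtain ⟨J, hJ⟩ := exists_forall_index_le_of_finite_complex n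
  refine ⟨J, fun p hp H hH ↦ ?_⟩
  have : Fact p.Prime := ⟨hp⟩
  obtain ⟨ρ, hρ⟩ := exists_injective_complex_of_not_dvd_card hp H hH
  exact hJ H ρ hρ

end ReductionModuloPrimes

section SIntegers

open NumberField IsDedekindDomain

theorem fg_of_fg_ker {G N : Type*} [CommGroup G] [CommGroup N] [IsNoetherian ℤ (Additive N)]
    (f : G →* N) [Group.FG f.ker] : Group.FG G := by
  rw [GroupFG.iff_add_fg, ← Module.Finite.iff_addGroup_fg, Module.finite_def]
  let φ : Additive G →ₗ[ℤ] Additive N := f.toAdditive.toIntLinearMap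
  let ker : Additive f.ker →ₗ[ℤ] Additive G := f.ker.subtype.toAdditive.toIntLinearMap
  have hker : ⊤ ⊓ φ.ker = ker.range := by
    ext x
    exact ⟨fun hx ↦ ⟨.ofMul ⟨x.toMul, hx.2⟩, rfl⟩, fun ⟨y, hy⟩ ↦ ⟨trivial, hy ▸ y.toMul.2⟩⟩
  refine Submodule.fg_of_fg_map_of_fg_inf_ker φ (IsNoetherian.noetherian _) ?_
  have : Module.Finite ℤ (Additive f.ker) := Module.Finite.iff_addGroup_fg.mpr inferInstance
  rw [hker, LinearMap.range_eq_map]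
  exact Module.Finite.fg_top.map ker

variable {R K : Type*} [CommRing R] [IsDedekindDomain R] [Field K] [Algebra R K]
  [IsFractionRing R K]

theorem mem_range_units_map_of_valuation_eq_one {x : Kˣ}
    (hx : ∀ v : HeightOneSpectrum R, v.valuation K (x : K) = 1) :
    x ∈ (Units.map (algebraMap R K : R →* K)).range := by
  obtain ⟨a, ha⟩ := HeightOneSpectrum.mem_integers_of_valuation_le_one K (x : K) fun v ↦ (hx v).le
  obtain ⟨b, hb⟩ := HeightOneSpectrum.mem_integers_of_valuation_le_one (R := R) K
    ((x⁻¹ : Kˣ) : K) fun v ↦ by rw [Units.val_inv_eq_inv_val, map_inv₀, hx v, inv_one]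
  have hab : a * b = 1 := IsFractionRing.injective R K (by
    rw [map_mul, ha, hb, Units.mul_inv, map_one])
  exact ⟨⟨a, b, hab, mul_comm a b ▸ hab⟩, Units.ext ha⟩

theorem fg_units_integer [Group.FG Rˣ] {S : Set (HeightOneSpectrum R)} (hS : S.Finite) :
    Group.FG (S.integer K)ˣ := by
  have : Finite S := hS
  let val : S.unit K →* (S → Multiplicative ℤ) :=
    MonoidHom.pi fun v ↦ v.1.valuationOfNeZero.comp (S.unit K).subtype
  have : IsNoetherian ℤ (Additive (S → Multiplicative ℤ)) :=
    inferInstanceAs (IsNoetherian ℤ (S → ℤ))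
  let units : Rˣ →* S.unit K := (Units.map (algebraMap R K : R →* K)).codRestrict (S.unit K)
    fun u v _ ↦ by rw [← HeightOneSpectrum.valuationOfNeZero_eq,
      HeightOneSpectrum.valuation_of_unit_eq, WithZero.coe_one]
  have hker : val.ker ≤ units.range := by
    intro x hx
    have hval (v : HeightOneSpectrum R) : v.valuation K ((x : Kˣ) : K) = 1 := by
      by_cases hv : v ∈ S
      · rw [← HeightOneSpectrum.valuationOfNeZero_eq, show v.valuationOfNeZero (x : Kˣ) = 1 from
          congrFun hx ⟨v, hv⟩, WithZero.coe_one]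
      · exact S.unit_valuation_eq_one K x hv
    obtain ⟨u, hu⟩ := mem_range_units_map_of_valuation_eq_one hval
    exact ⟨u, Subtype.ext hu⟩
  have hle : units.range ≤ val.ker := by
    rintro _ ⟨u, rfl⟩
    exact funext fun v ↦ HeightOneSpectrum.valuation_of_unit_eq v.1 u
  have : Group.FG val.ker := le_antisymm hker hle ▸ Group.fg_range units
  have := fg_of_fg_ker val
  exact Group.fg_of_surjective (f := (S.unitEquivUnitsInteger K).toMonoidHom)
    (S.unitEquivUnitsInteger K).surjective

theorem exists_ringHom_integer {A : Type*} [CommRing A] [Algebra.FiniteType ℤ A] (φ : A →+* K) :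
    ∃ S : Set (HeightOneSpectrum R), S.Finite ∧ Nonempty (A →+* S.integer K) := by
  obtain ⟨s, hs⟩ := Algebra.FiniteType.out (R := ℤ) (A := A)
  let S : Set (HeightOneSpectrum R) := ⋃ x ∈ s, HeightOneSpectrum.Support R (φ x)
  refine ⟨S, s.finite_toSet.biUnion fun x _ ↦ HeightOneSpectrum.Support.finite R _, ⟨?_⟩⟩
  have hle : Algebra.adjoin ℤ (s : Set A) ≤
      ((S.integer K).restrictScalars ℤ).comap φ.toIntAlgHom :=
    Algebra.adjoin_le fun x hx v hv ↦
      not_lt.mp fun hlt ↦ hv (Set.mem_biUnion (Finset.mem_coe.mp hx) hlt)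
  exact φ.codRestrict (S.integer K) fun x ↦ hle (hs ▸ trivial)

theorem exists_ringHom_of_integer {k : Type*} [Field k] {S : Set (HeightOneSpectrum R)}
    {v : HeightOneSpectrum R} (hv : v ∉ S) (π : R →+* k) (hπ : RingHom.ker π = v.asIdeal) :
    Nonempty (S.integer K →+* k) := by
  have hunit (y : v.asIdeal.primeCompl) : IsUnit (π y) := by
    rw [isUnit_iff_ne_zero, Ne, ← RingHom.mem_ker, hπ]
    exact y.2
  let O := HeightOneSpectrum.valuationSubringAtPrime K v
  have hle (x : S.integer K) : (x : K) ∈ O :=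
    (HeightOneSpectrum.valuationSubringAtPrime_eq_valuationSubring v).ge
      (S.integer_valuation_le_one K x hv)
  let incl : S.integer K →+* O := (S.integer K).val.toRingHom.codRestrict O hle
  exact ⟨(IsLocalization.lift (M := v.asIdeal.primeCompl) hunit).comp incl⟩

theorem subsingleton_prime_natCast_mem {A : Type*} [CommRing A] {I : Ideal A} (hI : I ≠ ⊤) :
    {p : ℕ | p.Prime ∧ (p : A) ∈ I}.Subsingleton := by
  rintro p ⟨hp, hpI⟩ q ⟨hq, hqI⟩
  by_contra hpq
  refine hI ((Ideal.eq_top_iff_one I).mpr ?_)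
  have hcop := ((Nat.coprime_primes hp hq).mpr hpq).cast (R := A)
  obtain ⟨a, b, hab⟩ := hcop
  exact hab ▸ I.add_mem (I.mul_mem_left a hpI) (I.mul_mem_left b hqI)

theorem exists_pow_lt_prod_integer (F : Type*) [Field F] [NumberField F]
    {S : Set (HeightOneSpectrum (𝓞 F))} (hS : S.Finite) (r : ℕ) :
    ∃ m ≠ 0, ∃ P : Finset ℕ, (∀ p ∈ P, p.Prime ∧ p - 1 ∣ m ∧ Nonempty (S.integer F →+* ZMod p)) ∧
      m ^ r < ∏ p ∈ P, p := by
  have hbad : (⋃ v ∈ S, {p : ℕ | p.Prime ∧ (p : 𝓞 F) ∈ v.asIdeal}).Finite :=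
    hS.biUnion fun v _ ↦ (subsingleton_prime_natCast_mem v.isPrime.ne_top).finite
  obtain ⟨m, hm, P, hP, hdvd, hlt⟩ := exists_pow_lt_prod_degreeOnePrimes F r hbad.toFinset
  refine ⟨m, hm, P, fun p hp ↦ ⟨(hP hp).1.1, hdvd p hp, ?_⟩, hlt⟩
  obtain ⟨⟨p_prime, ⟨π⟩⟩, hpS⟩ := hP hp
  have : Fact p.Prime := ⟨p_prime⟩
  have hp_mem : (p : 𝓞 F) ∈ RingHom.ker π := by simp [RingHom.mem_ker]
  let v : HeightOneSpectrum (𝓞 F) := ⟨RingHom.ker π, RingHom.ker_isPrime π, fun hbot ↦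
    p_prime.ne_zero (Nat.cast_eq_zero.mp ((Ideal.mem_bot).mp (hbot ▸ hp_mem)))⟩
  refine exists_ringHom_of_integer (v := v) (fun hv ↦ hpS ?_) π rfl
  exact hbad.coe_toFinset.symm ▸ Set.mem_biUnion hv ⟨p_prime, hp_mem⟩

end SIntegers

section Diagonal

theorem exists_basis_forall_apply_eq_smul {n K V ι : Type*} [Finite n] [Field K] [IsAlgClosed K]
    [AddCommGroup V] [Module K V] (b : Module.Basis n K V) {f : ι → Module.End K V}
    (hcomm : ∀ i j, Commute (f i) (f j)) (hf : ∀ i, (f i).IsSemisimple) :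
    ∃ (b' : Module.Basis n K V) (χ : n → ι → K), ∀ i j, f i (b' j) = χ j i • b' j := by
  have : FiniteDimensional K V := b.finiteDimensional_of_finite
  let E : Set V := ⋃ χ : ι → K, ((⨅ i, (f i).eigenspace (χ i) : Submodule K V) : Set V)
  have hE : ⊤ ≤ Submodule.span K E := by
    simp only [E, Submodule.span_iUnion, Submodule.span_eq, iSup_iInf_eigenspace_eq_top hcomm hf,
      le_refl]
  let e := (Module.Basis.ofSpan hE).indexEquiv b
  let b' := (Module.Basis.ofSpan hE).reindex e
  have hb' (j : n) : ∃ χ : ι → K, b' j ∈ ⨅ i, (f i).eigenspace (χ i) := by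
    refine Set.mem_iUnion.mp (Module.Basis.ofSpan_subset hE ⟨e.symm j, ?_⟩)
    exact (Module.Basis.reindex_apply _ e j).symm
  choose χ hχ using hb'
  exact ⟨b', χ, fun i j ↦ Module.End.mem_eigenspace_iff.mp (Submodule.mem_iInf _ |>.mp (hχ j) i)⟩

theorem isSemisimple_mulVecLin_map {n K L : Type*} [Fintype n] [Field K] [PerfectField K]
    [Field L] (f : K →+* L) {M : Matrix n n K} (hM : Module.End.IsSemisimple M.mulVecLin) :
    Module.End.IsSemisimple (M.map f).mulVecLin := by
  classical
  let _ := f.toAlgebra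
  have hminpoly : minpoly K M.mulVecLin = minpoly K M := Matrix.minpoly_toLin' M
  have hsep : (minpoly K M).Separable :=
    PerfectField.separable_iff_squarefree.mpr (hminpoly ▸ hM.minpoly_squarefree)
  refine Module.End.isSemisimple_of_squarefree_aeval_eq_zero
    (p := (minpoly K M).map f) hsep.map.squarefree ?_
  have haeval : Polynomial.aeval (M.map f) ((minpoly K M).map f) = 0 := by
    have h := congrArg (AlgHom.mapMatrix (m := n) (Algebra.ofId K L)) (minpoly.aeval K M)
    rw [← Polynomial.aeval_algHom_apply, map_zero] at h
    exact (Polynomial.aeval_map_algebraMap L _ _).trans h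
  have h := congrArg (Matrix.toLinAlgEquiv' (R := L) (n := n)) haeval
  rwa [← Polynomial.aeval_algHom_apply, map_zero] at h

variable (n : Type*) [Fintype n] [DecidableEq n]

/-- The diagonal torus of `GL n R`, as the homomorphism sending a family of units to the invertible
diagonal matrix with these diagonal entries. -/
def diagonalHom (R : Type*) [CommRing R] : (n → Rˣ) →* GL n R :=
  (Units.map (Matrix.diagonalRingHom n R).toMonoidHom).comp MulEquiv.piUnits.symm.toMonoidHom

variable {n}

theorem map_diagonalHom {R S : Type*} [CommRing R] [CommRing S] (f : R →+* S) (d : n → Rˣ) :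
    GeneralLinearGroup.map f (diagonalHom n R d) =
      diagonalHom n S fun i ↦ Units.map (f : R →* S) (d i) :=
  Units.ext (Matrix.diagonal_map (map_zero f))

theorem mem_range_diagonalHom {R : Type*} [CommRing R] {g : GL n R} :
    g ∈ (diagonalHom n R).range ↔ (g : Matrix n n R).IsDiag := by
  refine ⟨?_, fun hg ↦ ?_⟩
  · rintro ⟨d, rfl⟩
    exact Matrix.isDiag_diagonal _
  · have hunit : IsUnit (Matrix.diag (g : Matrix n n R)) :=
      Matrix.isUnit_diagonal.mp (hg.diagonal_diag.symm ▸ g.isUnit)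
    choose d hd using Pi.isUnit_iff.mp hunit
    refine ⟨d, Units.ext (Eq.trans ?_ hg.diagonal_diag)⟩
    exact congrArg Matrix.diagonal (funext hd)

theorem mem_range_diagonalHom_of_map {R S : Type*} [CommRing R] [CommRing S] {f : R →+* S}
    (hf : Function.Injective f) {g : GL n R}
    (hg : GeneralLinearGroup.map f g ∈ (diagonalHom n S).range) : g ∈ (diagonalHom n R).range :=
  mem_range_diagonalHom.mpr fun _ _ hij ↦
    (map_eq_zero_iff f hf).mp (mem_range_diagonalHom.mp hg hij)

theorem exists_forall_conj_mem_range_diagonalHom {K ι : Type*} [Field K] [IsAlgClosed K]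
    {g : ι → GL n K} (hcomm : ∀ i j, Commute (g i) (g j))
    (hg : ∀ i, Module.End.IsSemisimple (g i : Matrix n n K).mulVecLin) :
    ∃ Q : GL n K, ∀ i, Q⁻¹ * g i * Q ∈ (diagonalHom n K).range := by
  obtain ⟨b, χ, hb⟩ := exists_basis_forall_apply_eq_smul (Pi.basisFun K n)
    (f := fun i ↦ (g i : Matrix n n K).mulVecLin)
    (fun i j ↦ ((hcomm i j).map (Units.coeHom _)).map (Matrix.toLinAlgEquiv' (R := K))) hg
  let c := Pi.basisFun K n
  let Q : GL n K := ⟨c.toMatrix b, b.toMatrix c, c.toMatrix_mul_toMatrix_flip b,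
    b.toMatrix_mul_toMatrix_flip c⟩
  refine ⟨Q, fun i ↦ mem_range_diagonalHom.mpr fun j l hjl ↦ ?_⟩
  have hconj : ((Q⁻¹ * g i * Q : GL n K) : Matrix n n K) =
      LinearMap.toMatrix b b (g i : Matrix n n K).mulVecLin := by
    rw [← basis_toMatrix_mul_linearMap_toMatrix_mul_basis_toMatrix b c b c, ← Matrix.toLin'_apply',
      ← Matrix.toLin_eq_toLin', LinearMap.toMatrix_toLin]
    rfl
  simp [hconj, LinearMap.toMatrix_apply, hb, hjl.symm]

end Diagonal

section BoundedProducts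

theorem card_range_le_prod_card_map {G M : Type*} [Group G] [Group M] {k : ℕ}
    {A : Fin k → Subgroup G}
    (hA : ∀ x : G, ∃ a : Fin k → G, (∀ i, a i ∈ A i) ∧ x = (List.ofFn a).prod)
    (Φ : G →* M) [∀ i, Finite ((A i).map Φ)] :
    Nat.card Φ.range ≤ ∏ i, Nat.card ((A i).map Φ) := by
  let prod (t : ∀ i, (A i).map Φ) : M := (List.ofFn fun i ↦ (t i : M)).prod
  have hrange : (Φ.range : Set M) ⊆ Set.range prod := by
    rintro _ ⟨x, rfl⟩
    obtain ⟨a, ha, rfl⟩ := hA x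
    refine ⟨fun i ↦ ⟨Φ (a i), a i, ha i, rfl⟩, ?_⟩
    rw [map_list_prod, List.map_ofFn]
    rfl
  calc Nat.card Φ.range ≤ Nat.card (Set.range prod) := Nat.card_mono (Set.finite_range prod) hrange
    _ ≤ Nat.card (∀ i, (A i).map Φ) := Finite.card_range_le prod
    _ = ∏ i, Nat.card ((A i).map Φ) := Nat.card_pi

theorem card_range_le_pow_rank {T M : Type*} [CommGroup T] [Group.FG T] [Group M] (f : T →* M)
    {m : ℕ} (hm : m ≠ 0) (hf : ∀ t, f t ^ m = 1) : Nat.card f.range ≤ m ^ Group.rank T := by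
  have hpow (t : T ⧸ f.ker) : t ^ m = 1 := by
    obtain ⟨t, rfl⟩ := QuotientGroup.mk_surjective t
    rw [← QuotientGroup.mk_pow, QuotientGroup.eq_one_iff, MonoidHom.mem_ker, map_pow, hf]
  calc Nat.card f.range = Nat.card (T ⧸ f.ker) :=
        Nat.card_congr (QuotientGroup.quotientKerEquivRange f).symm.toEquiv
    _ ≤ m ^ Group.rank (T ⧸ f.ker) :=
        Nat.le_of_dvd (pow_pos hm.bot_lt _) (card_dvd_exponent_pow_rank' _ hpow)
    _ ≤ m ^ Group.rank T := Nat.pow_le_pow_right hm.bot_lt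
        (Group.rank_le_of_surjective _ (QuotientGroup.mk'_surjective f.ker))

theorem card_range_le_pow_rank_mul {G M T : Type*} [Group G] [Group M] [Finite M] [CommGroup T]
    [Group.FG T] {k : ℕ} {A : Fin k → Subgroup G}
    (hA : ∀ x : G, ∃ a : Fin k → G, (∀ i, a i ∈ A i) ∧ x = (List.ofFn a).prod) (Φ : G →* M)
    (f : T →* M) {m : ℕ} (hm : m ≠ 0) (hf : ∀ t, f t ^ m = 1)
    (hconj : ∀ i, ∃ q : M, ∀ a ∈ A i, q⁻¹ * Φ a * q ∈ f.range) :
    Nat.card Φ.range ≤ m ^ (Group.rank T * k) := by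
  have hcard (i : Fin k) : Nat.card ((A i).map Φ) ≤ m ^ Group.rank T := by
    obtain ⟨q, hq⟩ := hconj i
    have hle : (A i).map Φ ≤ f.range.map (MulAut.conj q).toMonoidHom := by
      rintro _ ⟨a, ha, rfl⟩
      exact ⟨_, hq a ha, by simp [mul_assoc]⟩
    calc Nat.card ((A i).map Φ) ≤ Nat.card (f.range.map (MulAut.conj q).toMonoidHom) :=
          Subgroup.card_le_of_le hle
      _ = Nat.card f.range := Subgroup.card_map_of_injective (MulAut.conj q).injective
      _ ≤ m ^ Group.rank T := card_range_le_pow_rank f hm hf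
  calc Nat.card Φ.range ≤ ∏ i, Nat.card ((A i).map Φ) := card_range_le_prod_card_map hA Φ
    _ ≤ ∏ _i : Fin k, m ^ Group.rank T := Finset.prod_le_prod' fun i _ ↦ hcard i
    _ = m ^ (Group.rank T * k) := by rw [Finset.prod_const, Finset.card_fin, pow_mul]

theorem card_range_dvd_card_range_pi {G ι : Type*} [Group G] {M : ι → Type*} [∀ i, Group (M i)]
    (φ : ∀ i, G →* M i) (i : ι) :
    Nat.card (φ i).range ∣ Nat.card (MonoidHom.pi φ).range := by
  have hrange : (φ i).range = (MonoidHom.pi φ).range.map (Pi.evalMonoidHom M i) := by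
    rw [MonoidHom.map_range]
    rfl
  rw [hrange]
  exact Subgroup.card_map_dvd _ _

theorem exists_ringHom_not_dvd_card_range {n : Type*} [Fintype n] [DecidableEq n] {O : Type*}
    [CommRing O] [Group.FG Oˣ]
    (hO : ∀ r : ℕ, ∃ m ≠ 0, ∃ P : Finset ℕ,
      (∀ p ∈ P, p.Prime ∧ p - 1 ∣ m ∧ Nonempty (O →+* ZMod p)) ∧ m ^ r < ∏ p ∈ P, p)
    {G : Type*} [Group G] (ρ : G →* GL n O) {k : ℕ} {A : Fin k → Subgroup G}
    (hA : ∀ x : G, ∃ a : Fin k → G, (∀ i, a i ∈ A i) ∧ x = (List.ofFn a).prod)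
    (hdiag : ∀ i, ∃ Q : GL n O, ∀ a ∈ A i, Q⁻¹ * ρ a * Q ∈ (diagonalHom n O).range) :
    ∃ p : ℕ, p.Prime ∧ ∃ ψ : O →+* ZMod p,
      ¬ p ∣ Nat.card ((GeneralLinearGroup.map ψ).comp ρ).range := by
  by_contra! hcon
  obtain ⟨m, hm, P, hP, hlt⟩ := hO (Group.rank (n → Oˣ) * k)
  have (p : P) : Fact (p : ℕ).Prime := ⟨(hP p p.2).1⟩
  let ψ (p : P) : O →+* ZMod p := (hP p p.2).2.2.some
  let red : GL n O →* ∀ p : P, GL n (ZMod p) := MonoidHom.pi fun p ↦ GeneralLinearGroup.map (ψ p)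
  have hpow (d : n → Oˣ) : red (diagonalHom n O d) ^ m = 1 := by
    ext1 p
    obtain ⟨c, hc⟩ := (hP p p.2).2.1
    change GeneralLinearGroup.map (ψ p) (diagonalHom n O d) ^ m = 1
    rw [map_diagonalHom, ← map_pow, ← map_one (diagonalHom n (ZMod p))]
    congr 1
    ext1 i
    rw [Pi.pow_apply, hc, pow_mul, ZMod.units_pow_card_sub_one_eq_one, one_pow, Pi.one_apply]
  have hdvd : ∏ p ∈ P, p ∣ Nat.card (red.comp ρ).range :=
    Finset.prod_primes_dvd _ (fun p hp ↦ (hP p hp).1.prime) fun p hp ↦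
      (hcon p (hP p hp).1 (ψ ⟨p, hp⟩)).trans
        (card_range_dvd_card_range_pi (fun p ↦ (GeneralLinearGroup.map (ψ p)).comp ρ) ⟨p, hp⟩)
  have hle : Nat.card (red.comp ρ).range ≤ m ^ (Group.rank (n → Oˣ) * k) := by
    refine card_range_le_pow_rank_mul hA _ (red.comp (diagonalHom n O)) hm hpow fun i ↦ ?_
    obtain ⟨Q, hQ⟩ := hdiag i
    refine ⟨red Q, fun a ha ↦ ?_⟩
    rw [MonoidHom.comp_apply, ← map_inv, ← map_mul, ← map_mul, ← MonoidHom.map_range]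
    exact Subgroup.mem_map_of_mem red (hQ a ha)
  exact hlt.not_ge ((Nat.le_of_dvd Nat.card_pos hdvd).trans hle)

end BoundedProducts

section SubgroupsOfBoundedIndex

theorem finite_monoidHom_of_fg (G H : Type*) [Group G] [Group.FG G] [Group H] [Finite H] :
    Finite (G →* H) := by
  obtain ⟨S, hS⟩ := Group.fg_def.mp ‹Group.FG G›
  refine Finite.of_injective (fun (f : G →* H) (s : S) ↦ f s) fun f g hfg ↦ ?_
  exact MonoidHom.eq_of_eqOn_dense hS fun x hx ↦ congrFun hfg ⟨x, hx⟩

theorem exists_finiteIndex_forall_le (G : Type*) [Group G] [Group.FG G] (J : ℕ) :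
    ∃ N : Subgroup G, N.FiniteIndex ∧ ∀ H : Subgroup G, H.FiniteIndex → H.index ≤ J → N ≤ H := by
  have := finite_monoidHom_of_fg G (Equiv.Perm (Fin J))
  refine ⟨⨅ f : G →* Equiv.Perm (Fin J), f.ker,
    Subgroup.finiteIndex_iInf fun f ↦ inferInstance, fun H hH hJ ↦ ?_⟩
  have := Fintype.ofFinite (G ⧸ H)
  obtain ⟨e⟩ : Nonempty (G ⧸ H ↪ Fin J) := Function.Embedding.nonempty_of_card_le
    (by rwa [Fintype.card_fin, ← Nat.card_eq_fintype_card])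
  let toPerm := (Equiv.Perm.viaEmbeddingHom e).comp (MulAction.toPermHom G (G ⧸ H))
  have hker : toPerm.ker = H.normalCore := by
    rw [Subgroup.normalCore_eq_ker]
    exact MonoidHom.ker_comp_of_injective _ _ (Equiv.Perm.viaEmbeddingHom_injective e)
  exact (iInf_le _ toPerm).trans (hker.trans_le H.normalCore_le)

theorem notMem_commutator_comap {G H : Type*} [Group G] [Group H] {f : G →* H} {B : Subgroup H}
    [IsMulCommutative B] {z : G} (hz : f z ≠ 1) : z ∉ ⁅B.comap f, B.comap f⁆ := by
  have hle : ⁅B.comap f, B.comap f⁆.map f ≤ ⁅B, B⁆ := by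
    rw [Subgroup.map_commutator]
    exact Subgroup.commutator_mono (Subgroup.map_comap_le f B) (Subgroup.map_comap_le f B)
  rw [(Subgroup.commutator_self_eq_bot_iff (H := B)).mpr ‹_›] at hle
  exact fun hmem ↦ hz (Subgroup.mem_bot.mp (hle (Subgroup.mem_map_of_mem f hmem)))

theorem isVirtuallyAbelian_of_forall_notMem_commutator {G : Type*} [Group G] [Group.FG G] (J : ℕ)
    (h : ∀ z : G, z ≠ 1 → ∃ B : Subgroup G, B.FiniteIndex ∧ B.index ≤ J ∧ z ∉ ⁅B, B⁆) :
    IsVirtuallyAbelian G := by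
  obtain ⟨N, hN, hNle⟩ := exists_finiteIndex_forall_le G J
  refine ⟨N, hN, fun x y ↦ Subtype.ext (commutatorElement_eq_one_iff_mul_comm.mp ?_)⟩
  by_contra hxy
  obtain ⟨B, hB, hBJ, hBz⟩ := h _ hxy
  exact hBz (Subgroup.commutator_mem_commutator (hNle B hB hBJ x.2) (hNle B hB hBJ y.2))

end SubgroupsOfBoundedIndex

section ProductsOfSemisimpleAbelianSubgroups

variable {n G : Type*} [Fintype n] [DecidableEq n] [Group G] {k : ℕ} {A : Fin k → Subgroup G}

theorem exists_hom_zmod_of_isUnit {R : Type*} [CommRing R] [CharZero R] [Algebra.FiniteType ℤ R]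
    (hA : ∀ x : G, ∃ a : Fin k → G, (∀ i, a i ∈ A i) ∧ x = (List.ofFn a).prod) (ρ : G →* GL n R)
    (hdiag : ∀ i, ∃ Q : GL n R, ∀ a ∈ A i, Q⁻¹ * ρ a * Q ∈ (diagonalHom n R).range)
    {z : G} {i j : n} (hz : IsUnit ((ρ z - 1 : Matrix n n R) i j)) :
    ∃ p : ℕ, p.Prime ∧ ∃ σ : G →* GL n (ZMod p), ¬ p ∣ Nat.card σ.range ∧ σ z ≠ 1 := by
  obtain ⟨F, _, _, ⟨φ⟩⟩ := exists_ringHom_numberField R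
  obtain ⟨S, hS, ⟨φ'⟩⟩ := exists_ringHom_integer (R := NumberField.RingOfIntegers F) φ
  have : Group.FG (NumberField.RingOfIntegers F)ˣ := Group.fg_iff_monoid_fg.mpr inferInstance
  have := fg_units_integer (K := F) hS
  let ρ' : G →* GL n (S.integer F) := (GeneralLinearGroup.map φ').comp ρ
  have hdiag' (i : Fin k) : ∃ Q : GL n (S.integer F), ∀ a ∈ A i,
      Q⁻¹ * ρ' a * Q ∈ (diagonalHom n (S.integer F)).range := by
    obtain ⟨Q, hQ⟩ := hdiag i
    refine ⟨GeneralLinearGroup.map φ' Q, fun a ha ↦ ?_⟩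
    obtain ⟨d, hd⟩ := hQ a ha
    refine ⟨_, (map_diagonalHom φ' d).symm.trans ?_⟩
    rw [hd, map_mul, map_mul, map_inv, MonoidHom.comp_apply]
  obtain ⟨p, hp, ψ, hψ⟩ :=
    exists_ringHom_not_dvd_card_range (exists_pow_lt_prod_integer F hS) ρ' hA hdiag'
  have : Fact p.Prime := ⟨hp⟩
  exact ⟨p, hp, _, hψ, generalLinearGroup_map_ne_one ψ
    (generalLinearGroup_map_sub_one_apply φ' (ρ z) i j ▸ hz.map φ')⟩

theorem exists_hom_zmod_of_forall_conj_mem_range_diagonalHom {K : Type*} [Field K] [CharZero K]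
    [Group.FG G]
    (hA : ∀ x : G, ∃ a : Fin k → G, (∀ i, a i ∈ A i) ∧ x = (List.ofFn a).prod) (ρ : G →* GL n K)
    (hdiag : ∀ i, ∃ Q : GL n K, ∀ a ∈ A i, Q⁻¹ * ρ a * Q ∈ (diagonalHom n K).range)
    {z : G} (hz : ρ z ≠ 1) :
    ∃ p : ℕ, p.Prime ∧ ∃ σ : G →* GL n (ZMod p), ¬ p ∣ Nat.card σ.range ∧ σ z ≠ 1 := by
  choose Q hQ using hdiag
  obtain ⟨i, j, hij⟩ : ∃ i j, (ρ z - 1 : Matrix n n K) i j ≠ 0 := by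
    by_contra! hzero
    exact hz (Units.ext (sub_eq_zero.mp (Matrix.ext hzero)))
  obtain ⟨R, hR, hQR, ρ', hρ', hunit⟩ :=
    exists_fg_subalgebra_lift ρ (Set.finite_range Q) (Set.finite_singleton z)
  have : Algebra.FiniteType ℤ R := R.fg_iff_finiteType.mp hR
  refine exists_hom_zmod_of_isUnit hA ρ' (fun l ↦ ?_) (hunit z rfl i j hij.isUnit)
  obtain ⟨q, hq⟩ := hQR ⟨l, rfl⟩
  refine ⟨q, fun a ha ↦ mem_range_diagonalHom_of_map (f := (R.val : R →+* K))
    Subtype.val_injective ?_⟩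
  rw [map_mul, map_mul, map_inv, hq, hρ']
  exact hQ l a ha

theorem exists_hom_zmod_of_isSemisimple {K : Type*} [Field K] [CharZero K] [Group.FG G]
    (hA : ∀ x : G, ∃ a : Fin k → G, (∀ i, a i ∈ A i) ∧ x = (List.ofFn a).prod) (ρ : G →* GL n K)
    (hcomm : ∀ i, ∀ x ∈ A i, ∀ y ∈ A i, Commute (ρ x) (ρ y))
    (hss : ∀ i, ∀ x ∈ A i, Module.End.IsSemisimple (ρ x : Matrix n n K).mulVecLin)
    {z : G} (hz : ρ z ≠ 1) :
    ∃ p : ℕ, p.Prime ∧ ∃ σ : G →* GL n (ZMod p), ¬ p ∣ Nat.card σ.range ∧ σ z ≠ 1 := by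
  let ext : GL n K →* GL n (AlgebraicClosure K) :=
    GeneralLinearGroup.map (algebraMap K (AlgebraicClosure K))
  have hext : Function.Injective ext :=
    generalLinearGroup_map_injective (algebraMap K (AlgebraicClosure K)).injective
  have : CharZero (AlgebraicClosure K) :=
    charZero_of_injective_algebraMap (algebraMap K (AlgebraicClosure K)).injective
  refine exists_hom_zmod_of_forall_conj_mem_range_diagonalHom hA (ext.comp ρ) (fun i ↦ ?_)
    ((map_ne_one_iff ext hext).mpr hz)
  obtain ⟨Q, hQ⟩ := exists_forall_conj_mem_range_diagonalHom (g := fun a : A i ↦ ext (ρ a))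
    (fun a b ↦ (hcomm i a a.2 b b.2).map ext)
    fun a ↦ isSemisimple_mulVecLin_map (algebraMap K _) (hss i a a.2)
  exact ⟨Q, fun a ha ↦ hQ ⟨a, ha⟩⟩

end ProductsOfSemisimpleAbelianSubgroups

theorem stmt_14_general {K : Type*} [Field K] [CharZero K] {n : ℕ}
    (Γ : Subgroup (GL (Fin n) K)) (hfg : Group.FG ↥Γ)
    (k : ℕ) (A : Fin k → Subgroup (GL (Fin n) K))
    (hle : ∀ i, A i ≤ Γ)
    (hab : ∀ i, ∀ x ∈ A i, ∀ y ∈ A i, x * y = y * x)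
    (hss : ∀ i, ∀ a ∈ A i, IsSemisimpleElt a)
    (hprod : ∀ x ∈ Γ, ∃ a : Fin k → GL (Fin n) K,
      (∀ i, a i ∈ A i) ∧ x = (List.ofFn a).prod) :
    IsVirtuallyAbelian ↥Γ := by
  have hcover (x : Γ) : ∃ a : Fin k → Γ,
      (∀ i, a i ∈ (A i).subgroupOf Γ) ∧ x = (List.ofFn a).prod := by
    obtain ⟨a, ha, hx⟩ := hprod x x.2
    refine ⟨fun i ↦ ⟨a i, hle i (ha i)⟩, ha, Subtype.ext ?_⟩
    rw [hx, ← Subgroup.subtype_apply, map_list_prod, List.map_ofFn]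
    rfl
  obtain ⟨J, hJ⟩ := exists_forall_index_le_of_not_dvd_card (Fin n)
  refine isVirtuallyAbelian_of_forall_notMem_commutator J fun z hz ↦ ?_
  obtain ⟨p, hp, σ, hσ, hσz⟩ := exists_hom_zmod_of_isSemisimple hcover Γ.subtype
    (fun i x hx y hy ↦ hab i x hx y hy) (fun i x hx ↦ hss i x hx)
    ((map_ne_one_iff _ Γ.subtype_injective).mpr hz)
  obtain ⟨B, hB, hBJ⟩ := hJ p hp σ.range hσ
  have : Fact p.Prime := ⟨hp⟩
  have hindex : (B.comap σ.rangeRestrict).index = B.index :=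
    B.index_comap_of_surjective σ.rangeRestrict_surjective
  exact ⟨B.comap σ.rangeRestrict, ⟨hindex ▸ B.index_ne_zero_of_finite⟩, hindex ▸ hBJ,
    notMem_commutator_comap fun h ↦ hσz (congrArg Subtype.val h)⟩

/-- A finitely generated anisotropic linear group over a field of characteristic zero that is
a product of finitely many abelian subgroups is virtually abelian. -/
theorem stmt_14 {K : Type*} [Field K] [CharZero K] {n : ℕ} (hn : 1 ≤ n)
    (Γ : Subgroup (GL (Fin n) K)) (hfg : Group.FG ↥Γ)
    (hani : ∀ g ∈ Γ, IsSemisimpleElt g)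
    (k : ℕ) (A : Fin k → Subgroup (GL (Fin n) K))
    (hle : ∀ i, A i ≤ Γ)
    (hab : ∀ i, ∀ x ∈ A i, ∀ y ∈ A i, x * y = y * x)
    (hprod : ∀ x ∈ Γ, ∃ a : Fin k → GL (Fin n) K,
      (∀ i, a i ∈ A i) ∧ x = (List.ofFn a).prod) :
    IsVirtuallyAbelian ↥Γ :=
  stmt_14_general Γ hfg k A hle hab (fun i a ha ↦ hani a (hle i ha)) hprod
end
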